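/- arXiv:1703.00766 — 3 statements merged into one kernel-verified Lean document; each statement's English description precedes it below -/
import Mathlib

section
/- Let R be a Noetherian ring, 𝔞 an ideal, S a Serre subcategory of the category of R-modules, s a non-negative integer, and M an R-module with Ext^s_R(R/𝔞, M) ∈ S. If Ext^j_R(R/𝔞, H^i_𝔞(M)) ∈ S for all i < s and all j ≥ 0, then Hom_R(R/𝔞, H^s_𝔞(M)) ∈ S. -/
open CategoryTheory

universe u

variable (R : Type u) [CommRing R]

/-- The `i`-th Ext module `Ext^i_R(N, M)` of `R`-modules. -/
noncomputable def extModule (i : ℕ) (N M : ModuleCat.{u} R) : ModuleCat.{u} R :=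
  ((Ext R (ModuleCat.{u} R) i).obj (Opposite.op N)).obj M

/-- A module is weakly Laskerian if every quotient has finitely many associated primes. -/
def IsWeaklyLaskerian (M : Type u) [AddCommGroup M] [Module R M] : Prop :=
  ∀ N : Submodule R M, (associatedPrimes R (M ⧸ N)).Finite

/-- `M` is `𝔞`-cofinite: `Supp M ⊆ V(𝔞)` and all `Ext^i_R(R/𝔞, M)` are finitely generated. -/
def IsCofinite (𝔞 : Ideal R) (M : ModuleCat.{u} R) : Prop :=
  Module.support R M ⊆ PrimeSpectrum.zeroLocus (𝔞 : Set R) ∧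
    ∀ i : ℕ, Module.Finite R (extModule R i (ModuleCat.of R (R ⧸ 𝔞)) M)

/-- `M` is `𝔞`-weakly cofinite: `Supp M ⊆ V(𝔞)` and all `Ext^i_R(R/𝔞, M)` are weakly
Laskerian. -/
def IsWeaklyCofinite (𝔞 : Ideal R) (M : ModuleCat.{u} R) : Prop :=
  Module.support R M ⊆ PrimeSpectrum.zeroLocus (𝔞 : Set R) ∧
    ∀ i : ℕ, IsWeaklyLaskerian R (extModule R i (ModuleCat.of R (R ⧸ 𝔞)) M)

/-- The Krull dimension of the support of a module. -/
noncomputable def suppDim (M : Type u) [AddCommGroup M] [Module R M] : WithBot ℕ∞ :=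
  Order.krullDim (Module.support R M)

/-- The cohomological dimension `cd(𝔞, M) = sup {i | H^i_𝔞(M) ≠ 0}`, as an element of `ℕ∞`. -/
noncomputable def cohomologicalDim (𝔞 : Ideal R) (M : ModuleCat.{u} R) : ℕ∞ :=
  ⨆ i ∈ {i : ℕ | Nontrivial ((localCohomology 𝔞 i).obj M)}, (i : ℕ∞)

/-- `p` is an attached prime of `M`: `p` is prime and is the annihilator of a quotient
of `M`. -/
def IsAttachedPrime (M : Type u) [AddCommGroup M] [Module R M] (p : Ideal R) : Prop :=
  p.IsPrime ∧ ∃ N : Submodule R M, p = Module.annihilator R (M ⧸ N)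

/-- A Serre subcategory of the category of `R`-modules: a class of modules closed under
submodules (subobjects), quotients, and extensions. -/
structure SerreClass where
  P : ModuleCat.{u} R → Prop
  mem_of_mono : ∀ {X Y : ModuleCat.{u} R} (f : X ⟶ Y), Mono f → P Y → P X
  mem_of_epi : ∀ {X Y : ModuleCat.{u} R} (f : X ⟶ Y), Epi f → P X → P Y
  mem_of_extension : ∀ (S : CategoryTheory.ShortComplex (ModuleCat.{u} R)),
    S.ShortExact → P S.X₁ → P S.X₃ → P S.X₂

open CategoryTheory Limits
namespace LCSerre
section Derived
variable {C : Type*} [Category* C] [Abelian C]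
  {D : Type*} [Category* D] [Abelian D]

/-- The functor applied to a complex. -/
noncomputable abbrev ap (F : C ⥤ D) [F.Additive] (K : ChainComplex C ℕ) : ChainComplex D ℕ :=
  (F.mapHomologicalComplex _).obj K

/-- The natural transformation applied to a complex. -/
noncomputable abbrev apT {F G : C ⥤ D} [F.Additive] [G.Additive] (α : F ⟶ G)
    (K : ChainComplex C ℕ) : ap F K ⟶ ap G K :=
  (NatTrans.mapHomologicalComplex α _).app K

/-- The functor applied to a morphism of complexes. -/
noncomputable abbrev apM (F : C ⥤ D) [F.Additive] {K L : ChainComplex C ℕ} (φ : K ⟶ L) :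
    ap F K ⟶ ap F L :=
  (F.mapHomologicalComplex _).map φ

lemma apT_comp {F G H : C ⥤ D} [F.Additive] [G.Additive] [H.Additive]
    {α : F ⟶ G} {β : G ⟶ H} (w : α ≫ β = 0) (K : ChainComplex C ℕ) :
    apT α K ≫ apT β K = 0 := by
  ext n
  exact congr_app w (K.X n)

lemma apT_nat {F G : C ⥤ D} [F.Additive] [G.Additive] (α : F ⟶ G)
    {K L : ChainComplex C ℕ} (φ : K ⟶ L) : apM F φ ≫ apT α L = apT α K ≫ apM G φ := by
  ext n
  exact α.naturality (φ.f n)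

variable {F G H : C ⥤ D} [F.Additive] [G.Additive] [H.Additive]
  {α : F ⟶ G} {β : G ⟶ H} {w : α ≫ β = 0}

variable (α β w) in
/-- exactness on projectives -/
def ExactOnProj : Prop :=
  ∀ (X : C) [Projective X], (ShortComplex.mk (α.app X) (β.app X) (congr_app w X)).ShortExact

lemma cplx_shortExact (h : ExactOnProj α β w) (K : ChainComplex C ℕ) (hK : ∀ n, Projective (K.X n)) :
    (ShortComplex.mk (apT α K) (apT β K) (apT_comp w K)).ShortExact := by
  apply HomologicalComplex.shortExact_of_degreewise_shortExact
  intro i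
  have := hK i
  exact h (K.X i)

lemma downRel (n : ℕ) : (ComplexShape.down ℕ).Rel (n+1) n := rfl

/-- connecting morphism for a complex -/
noncomputable def cδ (h : ExactOnProj α β w) (K : ChainComplex C ℕ) (hK : ∀ n, Projective (K.X n))
    (n : ℕ) : (ap H K).homology (n+1) ⟶ (ap F K).homology n :=
  (cplx_shortExact h K hK).δ (n+1) n (downRel n)

lemma cδ_nat (h : ExactOnProj α β w) {K L : ChainComplex C ℕ} (hK : ∀ n, Projective (K.X n))
    (hL : ∀ n, Projective (L.X n)) (φ : K ⟶ L) (n : ℕ) :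
    cδ h K hK n ≫ HomologicalComplex.homologyMap (apM F φ) n =
      HomologicalComplex.homologyMap (apM H φ) (n+1) ≫ cδ h L hL n :=
  HomologicalComplex.HomologySequence.δ_naturality
      (ShortComplex.Hom.mk (S₁ := ShortComplex.mk (apT α K) (apT β K) (apT_comp w K))
        (S₂ := ShortComplex.mk (apT α L) (apT β L) (apT_comp w L))
        (apM F φ) (apM G φ) (apM H φ) (apT_nat _ _) (apT_nat _ _))
      (cplx_shortExact h K hK) (cplx_shortExact h L hL) (n+1) n (downRel n)

lemma cδ_nat_assoc (h : ExactOnProj α β w) {K L : ChainComplex C ℕ} (hK : ∀ n, Projective (K.X n))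
    (hL : ∀ n, Projective (L.X n)) (φ : K ⟶ L) (n : ℕ) {Z : D}
    (k : (ap F L).homology n ⟶ Z) :
    cδ h K hK n ≫ HomologicalComplex.homologyMap (apM F φ) n ≫ k =
      HomologicalComplex.homologyMap (apM H φ) (n+1) ≫ cδ h L hL n ≫ k := by
  rw [← Category.assoc, cδ_nat h hK hL, Category.assoc]

lemma hm_comp (w : α ≫ β = 0) (K : ChainComplex C ℕ) (n : ℕ) :
    HomologicalComplex.homologyMap (apT α K) n ≫ HomologicalComplex.homologyMap (apT β K) n = 0 := by
  rw [← HomologicalComplex.homologyMap_comp, apT_comp w, HomologicalComplex.homologyMap_zero]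

lemma hm_cδ (h : ExactOnProj α β w) (K : ChainComplex C ℕ) (hK : ∀ n, Projective (K.X n))
    (n : ℕ) : HomologicalComplex.homologyMap (apT β K) (n+1) ≫ cδ h K hK n = 0 :=
  (cplx_shortExact h K hK).comp_δ (n+1) n (downRel n)

lemma cδ_hm (h : ExactOnProj α β w) (K : ChainComplex C ℕ) (hK : ∀ n, Projective (K.X n))
    (n : ℕ) : cδ h K hK n ≫ HomologicalComplex.homologyMap (apT α K) n = 0 :=
  (cplx_shortExact h K hK).δ_comp (n+1) n (downRel n)

variable [EnoughProjectives C]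

/-- computing derived functors -/
noncomputable def ei (F : C ⥤ D) [F.Additive] (n : ℕ) (X : C) :
    (F.leftDerived n).obj X ≅ (ap F (projectiveResolution X).complex).homology n :=
  (projectiveResolution X).isoLeftDerivedObj F n

lemma ei_app (γ : F ⟶ G) (n : ℕ) (X : C) :
    (NatTrans.leftDerived γ n).app X ≫ (ei G n X).hom =
      (ei F n X).hom ≫ HomologicalComplex.homologyMap (apT γ _) n := by
  rw [← Iso.eq_comp_inv, Category.assoc]
  exact ProjectiveResolution.leftDerived_app_eq γ (projectiveResolution X) n

lemma ei_app_assoc (γ : F ⟶ G) (n : ℕ) (X : C) {Z : D}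
    (k : (ap G (projectiveResolution X).complex).homology n ⟶ Z) :
    (NatTrans.leftDerived γ n).app X ≫ (ei G n X).hom ≫ k =
      (ei F n X).hom ≫ HomologicalComplex.homologyMap (apT γ _) n ≫ k := by
  rw [← Category.assoc, ei_app, Category.assoc]

lemma lift_comm {X Y : C} (f : X ⟶ Y) :
    (ProjectiveResolution.lift f (projectiveResolution X) (projectiveResolution Y)).f 0 ≫
      (projectiveResolution Y).π.f 0 = (projectiveResolution X).π.f 0 ≫ f := by
  exact ProjectiveResolution.lift_commutes_zero f _ _

lemma ei_map (F : C ⥤ D) [F.Additive] (n : ℕ) {X Y : C} (f : X ⟶ Y) :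
    (F.leftDerived n).map f ≫ (ei F n Y).hom = (ei F n X).hom ≫
      HomologicalComplex.homologyMap (apM F (ProjectiveResolution.lift f (projectiveResolution X)
        (projectiveResolution Y))) n :=
  ProjectiveResolution.isoLeftDerivedObj_hom_naturality f _ _ _ (lift_comm f) F n

lemma ei_map_assoc (F : C ⥤ D) [F.Additive] (n : ℕ) {X Y : C} (f : X ⟶ Y) {Z : D}
    (k : (ap F (projectiveResolution Y).complex).homology n ⟶ Z) :
    (F.leftDerived n).map f ≫ (ei F n Y).hom ≫ k = (ei F n X).hom ≫
      HomologicalComplex.homologyMap (apM F (ProjectiveResolution.lift f (projectiveResolution X)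
        (projectiveResolution Y))) n ≫ k := by
  rw [← Category.assoc, ei_map, Category.assoc]

/-- connecting morphism -/
noncomputable def δ (h : ExactOnProj α β w) (n : ℕ) :
    H.leftDerived (n+1) ⟶ F.leftDerived n where
  app X := (ei H (n+1) X).hom ≫
    cδ h (projectiveResolution X).complex (projectiveResolution X).projective n ≫ (ei F n X).inv
  naturality X Y f := by
    rw [ei_map_assoc, ← cδ_nat_assoc h (projectiveResolution X).projective
      (projectiveResolution Y).projective, Category.assoc, Category.assoc]
    congr 2
    rw [Iso.eq_inv_comp, ← ei_map_assoc, Iso.hom_inv_id, Category.comp_id]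

lemma ei_δ (h : ExactOnProj α β w) (n : ℕ) (X : C) :
    (δ h n).app X ≫ (ei F n X).hom = (ei H (n+1) X).hom ≫
    cδ h (projectiveResolution X).complex (projectiveResolution X).projective n := by
  simp [δ]

lemma ei_δ_assoc (h : ExactOnProj α β w) (n : ℕ) (X : C) {Z : D}
    (k : (ap F (projectiveResolution X).complex).homology n ⟶ Z) :
    (δ h n).app X ≫ (ei F n X).hom ≫ k = (ei H (n+1) X).hom ≫
    cδ h (projectiveResolution X).complex (projectiveResolution X).projective n ≫ k := by
  rw [← Category.assoc, ei_δ, Category.assoc]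

lemma comp_leftDerived (w : α ≫ β = 0) (n : ℕ) :
    NatTrans.leftDerived α n ≫ NatTrans.leftDerived β n = 0 := by
  ext X
  rw [← cancel_mono (ei H n X).hom, NatTrans.comp_app, Category.assoc, ei_app, ei_app_assoc,
    hm_comp w]
  simp

lemma comp_δ (h : ExactOnProj α β w) (n : ℕ) :
    NatTrans.leftDerived β (n+1) ≫ δ h n = 0 := by
  ext X
  rw [← cancel_mono (ei F n X).hom, NatTrans.comp_app, Category.assoc, ei_δ, ei_app_assoc,
    hm_cδ]
  simp

lemma δ_comp (h : ExactOnProj α β w) (n : ℕ) :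
    δ h n ≫ NatTrans.leftDerived α n = 0 := by
  ext X
  rw [← cancel_mono (ei G n X).hom, NatTrans.comp_app, Category.assoc, ei_app, ei_δ_assoc,
    cδ_hm]
  simp

lemma exact₂ (h : ExactOnProj α β w) (n : ℕ) (X : C) :
    (ShortComplex.mk _ _ (congr_app (comp_leftDerived w n) X)).Exact :=
  (ShortComplex.exact_iff_of_iso (ShortComplex.isoMk
    (S₂ := ShortComplex.mk _ _ (hm_comp w (projectiveResolution X).complex n))
    (ei F n X) (ei G n X) (ei H n X)
    (ei_app _ _ _).symm (ei_app _ _ _).symm)).2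
    ((cplx_shortExact h (projectiveResolution X).complex
      (projectiveResolution X).projective).homology_exact₂ n)

lemma exact₃ (h : ExactOnProj α β w) (n : ℕ) (X : C) :
    (ShortComplex.mk _ _ (congr_app (comp_δ h n) X)).Exact :=
  (ShortComplex.exact_iff_of_iso (ShortComplex.isoMk
    (S₂ := ShortComplex.mk _ _ (hm_cδ h (projectiveResolution X).complex
      (projectiveResolution X).projective n))
    (ei G (n+1) X) (ei H (n+1) X) (ei F n X)
    (ei_app _ _ _).symm (ei_δ _ _ _).symm)).2
    ((cplx_shortExact h (projectiveResolution X).complex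
      (projectiveResolution X).projective).homology_exact₃ (n+1) n (downRel n))

lemma exact₁ (h : ExactOnProj α β w) (n : ℕ) (X : C) :
    (ShortComplex.mk _ _ (congr_app (δ_comp h n) X)).Exact :=
  (ShortComplex.exact_iff_of_iso (ShortComplex.isoMk
    (S₂ := ShortComplex.mk _ _ (cδ_hm h (projectiveResolution X).complex
      (projectiveResolution X).projective n))
    (ei H (n+1) X) (ei F n X) (ei G n X)
    (ei_δ _ _ _).symm (ei_app _ _ _).symm)).2
    ((cplx_shortExact h (projectiveResolution X).complex
      (projectiveResolution X).projective).homology_exact₁ (n+1) n (downRel n))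

lemma fromZero_eq (F : C ⥤ D) [F.Additive] (X : C) :
    F.fromLeftDerivedZero.app X = (ei F 0 X).hom ≫
      (ap F (projectiveResolution X).complex).homologyι 0 ≫
        (projectiveResolution X).fromLeftDerivedZero' F :=
  (projectiveResolution X).fromLeftDerivedZero_eq F

lemma fromZero_nat (γ : F ⟶ G) (X : C) :
    (NatTrans.leftDerived γ 0).app X ≫ G.fromLeftDerivedZero.app X =
      F.fromLeftDerivedZero.app X ≫ γ.app X := by
  rw [fromZero_eq, fromZero_eq, ei_app_assoc, Category.assoc, Category.assoc]
  have : (projectiveResolution X).fromLeftDerivedZero' F ≫ γ.app X =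
    HomologicalComplex.opcyclesMap (apT γ (projectiveResolution X).complex) 0 ≫
      (projectiveResolution X).fromLeftDerivedZero' G := by
    rw [← cancel_epi (HomologicalComplex.pOpcycles _ _),
      ProjectiveResolution.pOpcycles_comp_fromLeftDerivedZero'_assoc,
      HomologicalComplex.p_opcyclesMap_assoc,
      ProjectiveResolution.pOpcycles_comp_fromLeftDerivedZero']
    exact γ.naturality ((projectiveResolution X).π.f 0)
  rw [this, HomologicalComplex.homologyι_naturality_assoc]

lemma isZero_leftDerived_succ [PreservesFiniteLimits F] [PreservesFiniteColimits F] (n : ℕ) (X : C) :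
    IsZero ((F.leftDerived (n+1)).obj X) := by
  refine IsZero.of_iso ?_ (ei F (n+1) X)
  have := (projectiveResolution X).complex_exactAt_succ n
  rw [HomologicalComplex.exactAt_iff] at this
  refine (HomologicalComplex.exactAt_iff_isZero_homology _ _).1 ?_
  rw [HomologicalComplex.exactAt_iff]
  exact this.map F
end Derived
end LCSerre

namespace LCSerre
section ExtSec
open Opposite
variable {R}

/-- contravariant Hom -/
noncomputable abbrev yo (Y : ModuleCat.{u} R) : ModuleCat.{u} R ⥤ (ModuleCat.{u} R)ᵒᵖ :=
  ((linearYoneda R (ModuleCat.{u} R)).obj Y).rightOp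

/-- contravariant Hom, on maps -/
noncomputable abbrev yoM {Y Z : ModuleCat.{u} R} (f : Y ⟶ Z) : yo Z ⟶ yo Y :=
  NatTrans.rightOp ((linearYoneda R (ModuleCat.{u} R)).map f)

lemma comp_comp_zero {X Y Z W : ModuleCat.{u} R} {f : Y ⟶ Z} {g : Z ⟶ W} (w : f ≫ g = 0)
    (x : X ⟶ Y) : (x ≫ f) ≫ g = 0 := by
  rw [Category.assoc, w, comp_zero]

lemma comp_comp_zero' {X Y Z W : ModuleCat.{u} R} {f : Y ⟶ Z} {g : X ⟶ Y} (w : g ≫ f = 0)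
    (x : Z ⟶ W) : g ≫ (f ≫ x) = 0 := by
  rw [← Category.assoc, w, zero_comp]

lemma yoM_comp {Y Z W : ModuleCat.{u} R} {f : Y ⟶ Z} {g : Z ⟶ W} (w : f ≫ g = 0) :
    yoM g ≫ yoM f = 0 := by
  ext X
  apply Quiver.Hom.unop_inj
  ext x
  exact comp_comp_zero w x

lemma yo_exact {S : ShortComplex (ModuleCat.{u} R)} (hS : S.ShortExact) :
    ExactOnProj (yoM S.g) (yoM S.f) (yoM_comp S.zero) := by
  intro X _
  have hm := hS.mono_f
  have he := hS.epi_g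
  let T : ShortComplex (ModuleCat.{u} R) :=
    ShortComplex.mk (((linearYoneda R (ModuleCat.{u} R)).map S.f).app (op X))
      (((linearYoneda R (ModuleCat.{u} R)).map S.g).app (op X))
      (by
        ext x
        exact comp_comp_zero S.zero x)
  have hT : T.ShortExact := by
    refine { exact := ?_, mono_f := ?_, epi_g := ?_ }
    · rw [ShortComplex.moduleCat_exact_iff]
      intro (x : X ⟶ S.X₂) hx
      exact ⟨hS.exact.lift x hx, hS.exact.lift_f x hx⟩
    · rw [ModuleCat.mono_iff_injective]
      intro (x : X ⟶ S.X₁) (y : X ⟶ S.X₁) hxy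
      exact (cancel_mono S.f).1 hxy
    · rw [ModuleCat.epi_iff_surjective]
      intro (x : X ⟶ S.X₃)
      exact ⟨Projective.factorThru x S.g, Projective.factorThru_comp x S.g⟩
  exact hT.op

/-- Ext as a functor of the first variable -/
noncomputable def E (n : ℕ) (Y : ModuleCat.{u} R) : (ModuleCat.{u} R)ᵒᵖ ⥤ ModuleCat.{u} R :=
  ((yo Y).leftDerived n).leftOp

lemma extModule_eq (n : ℕ) (X Y : ModuleCat.{u} R) : extModule R n X Y = (E n Y).obj (op X) := rfl

/-- Ext, on maps -/
noncomputable def Em (n : ℕ) {Y Z : ModuleCat.{u} R} (f : Y ⟶ Z) : E n Y ⟶ E n Z :=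
  NatTrans.leftOp (NatTrans.leftDerived (yoM f) n)

/-- Ext, connecting maps -/
noncomputable def Ed {S : ShortComplex (ModuleCat.{u} R)} (hS : S.ShortExact) (n : ℕ) :
    E n S.X₃ ⟶ E (n+1) S.X₁ :=
  NatTrans.leftOp (δ (yo_exact hS) n)

/-- Exactness of a sequence of functors -/
def Ex {A B C : (ModuleCat.{u} R)ᵒᵖ ⥤ ModuleCat.{u} R} (f : A ⟶ B) (g : B ⟶ C) : Prop :=
  ∃ w : f ≫ g = 0, ∀ X, (ShortComplex.mk (f.app X) (g.app X) (congr_app w X)).Exact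

lemma Ex₂ {S : ShortComplex (ModuleCat.{u} R)} (hS : S.ShortExact) (n : ℕ) :
    Ex (Em n S.f) (Em n S.g) :=
  ⟨by
    ext1; ext1 X
    exact congrArg Quiver.Hom.unop (congr_app (comp_leftDerived (yoM_comp S.zero) n) X.unop),
   fun X => (exact₂ (yo_exact hS) n X.unop).unop⟩

lemma Ex₃ {S : ShortComplex (ModuleCat.{u} R)} (hS : S.ShortExact) (n : ℕ) :
    Ex (Em n S.g) (Ed hS n) :=
  ⟨by
    ext1; ext1 X
    exact congrArg Quiver.Hom.unop (congr_app (δ_comp (yo_exact hS) n) X.unop),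
   fun X => (exact₁ (yo_exact hS) n X.unop).unop⟩

lemma Ex₁ {S : ShortComplex (ModuleCat.{u} R)} (hS : S.ShortExact) (n : ℕ) :
    Ex (Ed hS n) (Em (n+1) S.f) :=
  ⟨by
    ext1; ext1 X
    exact congrArg Quiver.Hom.unop (congr_app (comp_δ (yo_exact hS) n) X.unop),
   fun X => (exact₃ (yo_exact hS) n X.unop).unop⟩

/-- The Hom complex of a short complex. -/
noncomputable def homCx (Y : ModuleCat.{u} R) (S : ShortComplex (ModuleCat.{u} R)) :
    ShortComplex (ModuleCat.{u} R) :=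
  ShortComplex.mk (((linearYoneda R (ModuleCat.{u} R)).obj Y).map S.g.op)
      (((linearYoneda R (ModuleCat.{u} R)).obj Y).map S.f.op)
      (by
        ext x
        exact comp_comp_zero' S.zero x)

lemma homCx_exact (Y : ModuleCat.{u} R) {S : ShortComplex (ModuleCat.{u} R)} (hS : S.ShortExact) :
    (homCx Y S).Exact := by
  have := hS.epi_g
  rw [ShortComplex.moduleCat_exact_iff]
  intro (x : S.X₂ ⟶ Y) hx
  exact ⟨hS.exact.desc x hx, hS.exact.g_desc x hx⟩

lemma homCx_mono (Y : ModuleCat.{u} R) {S : ShortComplex (ModuleCat.{u} R)} (hS : S.ShortExact) :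
    Mono (homCx Y S).f := by
  have := hS.epi_g
  rw [ModuleCat.mono_iff_injective]
  intro (x : S.X₃ ⟶ Y) (y : S.X₃ ⟶ Y) hxy
  exact (cancel_epi S.g).1 hxy

lemma homCx_epi (Y : ModuleCat.{u} R) [Injective Y] {S : ShortComplex (ModuleCat.{u} R)}
    (hS : S.ShortExact) : Epi (homCx Y S).g := by
  have := hS.mono_f
  rw [ModuleCat.epi_iff_surjective]
  intro (x : S.X₁ ⟶ Y)
  exact ⟨Injective.factorThru x S.f, Injective.comp_factorThru x S.f⟩

lemma yo_pres_colim (Y : ModuleCat.{u} R) : PreservesFiniteColimits (yo Y) := by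
  refine ((Functor.preservesFiniteColimits_tfae (yo Y)).out 0 3).1 ?_
  intro S hS
  have := homCx_mono Y hS
  exact ⟨(homCx_exact Y hS).op, (inferInstance : Epi (homCx Y S).f.op)⟩

lemma yo_pres_lim (Y : ModuleCat.{u} R) [Injective Y] : PreservesFiniteLimits (yo Y) := by
  refine ((Functor.preservesFiniteLimits_tfae (yo Y)).out 0 3).1 ?_
  intro S hS
  have := homCx_epi Y hS
  exact ⟨(homCx_exact Y hS).op, (inferInstance : Mono (homCx Y S).g.op)⟩

lemma E_injective (n : ℕ) (Y : ModuleCat.{u} R) [Injective Y] (X) : IsZero ((E (n+1) Y).obj X) := by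
  have := yo_pres_lim Y
  have := yo_pres_colim Y
  exact (isZero_leftDerived_succ (F := yo Y) n X.unop).unop

/-- `Ext^0 = Hom` -/
noncomputable def E0 (Y : ModuleCat.{u} R) : (linearYoneda R (ModuleCat.{u} R)).obj Y ≅ E 0 Y :=
  have := yo_pres_colim Y
  NatIso.ofComponents (fun X => (asIso ((yo Y).fromLeftDerivedZero.app X.unop)).unop)
   (fun {X Z} f => by
    apply Quiver.Hom.op_inj
    exact ((yo Y).fromLeftDerivedZero.naturality f.unop).symm)

lemma E0_nat {Y Z : ModuleCat.{u} R} (f : Y ⟶ Z) :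
    (linearYoneda R (ModuleCat.{u} R)).map f ≫ (E0 Z).hom = (E0 Y).hom ≫ Em 0 f := by
  ext1; ext1 X
  apply Quiver.Hom.op_inj
  exact (fromZero_nat (yoM f) X.unop).symm

end ExtSec
end LCSerre

namespace LCSerre
section LCSec
open Opposite
variable {R}

/-- the diagram of the `R/𝔞^n` -/
noncomputable def Dg (𝔞 : Ideal R) : ℕᵒᵖᵒᵖ ⥤ (ModuleCat.{u} R)ᵒᵖ :=
  (localCohomology.ringModIdeals (localCohomology.idealPowersDiagram 𝔞)).op

/-- Local cohomology as a colimit of modules. -/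
noncomputable def LC (𝔞 : Ideal R) (i : ℕ) (M : ModuleCat.{u} R) : ModuleCat.{u} R :=
  colim.obj (Dg 𝔞 ⋙ E i M)

/-- The comparison with the definition in the library. -/
noncomputable def LCiso (𝔞 : Ideal R) (i : ℕ) (M : ModuleCat.{u} R) :
    (localCohomology 𝔞 i).obj M ≅ LC 𝔞 i M :=
  colimitObjIsoColimitCompEvaluation
    (localCohomology.diagram (localCohomology.idealPowersDiagram 𝔞) i) M

/-- Transformation induced in the colimit -/
noncomputable def cm (𝔞 : Ideal R) {A B : (ModuleCat.{u} R)ᵒᵖ ⥤ ModuleCat.{u} R} (f : A ⟶ B) :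
    (colim (J := ℕᵒᵖᵒᵖ)).obj (Dg 𝔞 ⋙ A) ⟶ colim.obj (Dg 𝔞 ⋙ B) :=
  colim.map (Functor.whiskerLeft (Dg 𝔞) f)

lemma cm_exact (𝔞 : Ideal R) {A B C : (ModuleCat.{u} R)ᵒᵖ ⥤ ModuleCat.{u} R} {f : A ⟶ B} {g : B ⟶ C}
    (h : Ex f g) : ∃ w, (ShortComplex.mk (cm 𝔞 f) (cm 𝔞 g) w).Exact := by
  obtain ⟨w, h⟩ := h
  have w' : Functor.whiskerLeft (Dg 𝔞) f ≫ Functor.whiskerLeft (Dg 𝔞) g = 0 := by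
    ext1; ext1 X
    exact congr_app w _
  let T : ShortComplex (ℕᵒᵖᵒᵖ ⥤ ModuleCat.{u} R) := ShortComplex.mk _ _ w'
  have hT : T.Exact := by
    rw [ShortComplex.exact_iff_isZero_homology, Functor.isZero_iff]
    intro j
    refine IsZero.of_iso ?_ (T.mapHomologyIso ((evaluation _ _).obj j)).symm
    rw [← ShortComplex.exact_iff_isZero_homology]
    exact h _
  have : AB5OfSize.{0, 0} (ModuleCat.{u} R) := AB5OfSize_of_univLE.{0, 0, u, u} _
  have := hT.map (colim (J := ℕᵒᵖᵒᵖ) (C := ModuleCat.{u} R))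
  exact ⟨_, this⟩

lemma LC_zero_of (𝔞 : Ideal R) (A : (ModuleCat.{u} R)ᵒᵖ ⥤ ModuleCat.{u} R)
    (h : ∀ n : ℕ, IsZero (A.obj (op (ModuleCat.of R (R ⧸ 𝔞 ^ n))))) :
    IsZero ((colim (J := ℕᵒᵖᵒᵖ)).obj (Dg 𝔞 ⋙ A)) := by
  have : IsZero (Dg 𝔞 ⋙ A) := by
    rw [Functor.isZero_iff]
    intro n
    exact h n.unop.unop
  exact Functor.map_isZero colim this
end LCSec
end LCSerre

namespace LCSerre
section EvSec
open Opposite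
variable {R}

/-- The torsion submodule. -/
def Γ (𝔞 : Ideal R) (M : Type u) [AddCommGroup M] [Module R M] : Submodule R M where
  carrier := {x | ∃ n : ℕ, ∀ a ∈ 𝔞 ^ n, a • x = 0}
  zero_mem' := ⟨0, fun a _ => smul_zero a⟩
  add_mem' := by
    rintro x y ⟨n, hn⟩ ⟨m, hm⟩
    refine ⟨n + m, fun a ha => ?_⟩
    rw [smul_add, hn a (Ideal.pow_le_pow_right (Nat.le_add_right n m) ha),
      hm a (Ideal.pow_le_pow_right (Nat.le_add_left m n) ha), add_zero]
  smul_mem' := by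
    rintro c x ⟨n, hn⟩
    refine ⟨n, fun a ha => ?_⟩
    rw [smul_comm, hn a ha, smul_zero]

lemma mem_Γ {𝔞 : Ideal R} {M : Type u} [AddCommGroup M] [Module R M] {x : M} :
    x ∈ Γ 𝔞 M ↔ ∃ n : ℕ, ∀ a ∈ 𝔞 ^ n, a • x = 0 := Iff.rfl

/-- evaluation at one -/
noncomputable def evl (I : Ideal R) (M : ModuleCat.{u} R) :
    ((linearYoneda R (ModuleCat.{u} R)).obj M).obj (op (ModuleCat.of R (R ⧸ I))) ⟶ M :=
  ModuleCat.ofHom (X := (ModuleCat.of R (R ⧸ I) ⟶ M))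
    { toFun := fun g => g.hom (Submodule.Quotient.mk (1 : R))
      map_add' := fun _ _ => rfl
      map_smul' := fun _ _ => rfl }

lemma evl_inj (I : Ideal R) (M : ModuleCat.{u} R) (g h : ModuleCat.of R (R ⧸ I) ⟶ M)
    (e : (evl I M).hom g = (evl I M).hom h) : g = h := by
  ext
  exact e

lemma evl_kill (I : Ideal R) (M : ModuleCat.{u} R) (g : ModuleCat.of R (R ⧸ I) ⟶ M)
    (a : R) (ha : a ∈ I) : a • (evl I M).hom g = 0 := by
  have : a • (evl I M).hom g = g.hom (Submodule.Quotient.mk (a • 1 : R)) := (g.hom.map_smul a _).symm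
  rw [this]
  have h0 : (Submodule.Quotient.mk (a • 1 : R) : R ⧸ I) = 0 := by
    rw [Submodule.Quotient.mk_eq_zero]; simpa using ha
  rw [h0]; exact map_zero _

lemma evl_surj (I : Ideal R) (M : ModuleCat.{u} R) (x : M) (hx : ∀ a ∈ I, a • x = 0) :
    ∃ g : ModuleCat.of R (R ⧸ I) ⟶ M, (evl I M).hom g = x := by
  refine ⟨ModuleCat.ofHom (Submodule.liftQ I (LinearMap.toSpanSingleton R M x) ?_), ?_⟩
  · intro a ha; exact hx a ha
  · change (LinearMap.toSpanSingleton R M x) 1 = x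
    simp

/-- The colimit of Homs -/
noncomputable def G0 (𝔞 : Ideal R) (M : ModuleCat.{u} R) : ModuleCat.{u} R :=
  (colim (J := ℕᵒᵖᵒᵖ)).obj (Dg 𝔞 ⋙ (linearYoneda R (ModuleCat.{u} R)).obj M)

/-- the cocone of evaluations -/
noncomputable def evc (𝔞 : Ideal R) (M : ModuleCat.{u} R) :
    Cocone (Dg 𝔞 ⋙ (linearYoneda R (ModuleCat.{u} R)).obj M) where
  pt := M
  ι := { app := fun n => evl (𝔞 ^ n.unop.unop) M
         naturality := fun n m f => by
          ext (g : ModuleCat.of R (R ⧸ 𝔞 ^ n.unop.unop) ⟶ M)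
          rfl }

/-- evaluation -/
noncomputable def ev (𝔞 : Ideal R) (M : ModuleCat.{u} R) : G0 𝔞 M ⟶ M :=
  colimit.desc _ (evc 𝔞 M)

lemma ev_rep (𝔞 : Ideal R) (M : ModuleCat.{u} R) (x : G0 𝔞 M) :
    ∃ (n : ℕ) (g : ModuleCat.of R (R ⧸ 𝔞 ^ n) ⟶ M),
      x = (colimit.ι (Dg 𝔞 ⋙ (linearYoneda R (ModuleCat.{u} R)).obj M) (op (op n))).hom g := by
  have : PreservesFilteredColimitsOfSize.{0, 0} (forget (ModuleCat.{u} R)) :=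
    preservesFilteredColimitsOfSize_shrink.{0, u, 0, u} _
  obtain ⟨n, g, h⟩ := Concrete.colimit_exists_rep
    (Dg 𝔞 ⋙ (linearYoneda R (ModuleCat.{u} R)).obj M) x
  exact ⟨n.unop.unop, g, h.symm⟩

lemma ev_ι (𝔞 : Ideal R) (M : ModuleCat.{u} R) (n : ℕ) (g : ModuleCat.of R (R ⧸ 𝔞 ^ n) ⟶ M) :
    (ev 𝔞 M).hom
      ((colimit.ι (Dg 𝔞 ⋙ (linearYoneda R (ModuleCat.{u} R)).obj M) (op (op n))).hom g) =
     (evl (𝔞 ^ n) M).hom g := by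
  have := colimit.ι_desc (evc 𝔞 M) (op (op n))
  exact congrArg (fun k => k.hom g) this

lemma ev_mem (𝔞 : Ideal R) (M : ModuleCat.{u} R) (x : G0 𝔞 M) : (ev 𝔞 M).hom x ∈ Γ 𝔞 M := by
  obtain ⟨n, g, rfl⟩ := ev_rep 𝔞 M x
  rw [ev_ι]
  exact ⟨n, fun a ha => evl_kill _ _ g a ha⟩

lemma ev_surj (𝔞 : Ideal R) (M : ModuleCat.{u} R) (x : M) (hx : x ∈ Γ 𝔞 M) :
    ∃ y, (ev 𝔞 M).hom y = x := by
  obtain ⟨n, hn⟩ := hx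
  obtain ⟨g, hg⟩ := evl_surj _ _ x hn
  exact ⟨_, (ev_ι 𝔞 M n g).trans hg⟩

lemma ev_inj (𝔞 : Ideal R) (M : ModuleCat.{u} R) : Function.Injective (ev 𝔞 M).hom := by
  rw [← LinearMap.ker_eq_bot, LinearMap.ker_eq_bot']
  intro x hx
  obtain ⟨n, g, rfl⟩ := ev_rep 𝔞 M x
  rw [ev_ι] at hx
  have : g = 0 := evl_inj _ _ _ _ (hx.trans (map_zero _).symm)
  rw [this]
  exact map_zero _

/-- map -/
noncomputable def G0m (𝔞 : Ideal R) {M N : ModuleCat.{u} R} (f : M ⟶ N) : G0 𝔞 M ⟶ G0 𝔞 N :=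
  cm 𝔞 ((linearYoneda R (ModuleCat.{u} R)).map f)

lemma ev_nat (𝔞 : Ideal R) {M N : ModuleCat.{u} R} (f : M ⟶ N) :
    G0m 𝔞 f ≫ ev 𝔞 N = ev 𝔞 M ≫ f := by
  apply colimit.hom_ext
  intro j
  have h1 : colimit.ι (Dg 𝔞 ⋙ (linearYoneda R (ModuleCat.{u} R)).obj M) j ≫ G0m 𝔞 f =
    ((linearYoneda R (ModuleCat.{u} R)).map f).app _ ≫ colimit.ι (Dg 𝔞 ⋙ (linearYoneda R (ModuleCat.{u} R)).obj N) j := 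
    ι_colimMap _ _
  have h2 : colimit.ι (Dg 𝔞 ⋙ (linearYoneda R (ModuleCat.{u} R)).obj N) j ≫ ev 𝔞 N = (evc 𝔞 N).ι.app j :=
    colimit.ι_desc _ _
  have h3 : colimit.ι (Dg 𝔞 ⋙ (linearYoneda R (ModuleCat.{u} R)).obj M) j ≫ ev 𝔞 M = (evc 𝔞 M).ι.app j :=
    colimit.ι_desc _ _
  refine (Category.assoc _ _ _).symm.trans ((congrArg (· ≫ ev 𝔞 N) h1).trans ?_)
  refine (Category.assoc _ _ _).trans ((congrArg (_ ≫ ·) h2).trans ?_)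
  refine Eq.trans ?_ ((congrArg (· ≫ f) h3).symm.trans (Category.assoc _ _ _))
  rfl

/-- `LC 0` vs Hom colimit -/
noncomputable def LC0 (𝔞 : Ideal R) (M : ModuleCat.{u} R) : G0 𝔞 M ≅ LC 𝔞 0 M :=
  colim.mapIso (Functor.isoWhiskerLeft (Dg 𝔞) (E0 M))

lemma cm_comp (𝔞 : Ideal R) {A B C : (ModuleCat.{u} R)ᵒᵖ ⥤ ModuleCat.{u} R} (f : A ⟶ B)
    (g : B ⟶ C) : cm 𝔞 (f ≫ g) = cm 𝔞 f ≫ cm 𝔞 g := by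
  unfold cm
  rw [← Functor.map_comp]; rfl

/-- the map induced on local cohomology -/
noncomputable def LCm (𝔞 : Ideal R) (i : ℕ) {M N : ModuleCat.{u} R} (f : M ⟶ N) :
    LC 𝔞 i M ⟶ LC 𝔞 i N := cm 𝔞 (Em i f)

lemma LC0_nat (𝔞 : Ideal R) {M N : ModuleCat.{u} R} (f : M ⟶ N) :
    G0m 𝔞 f ≫ (LC0 𝔞 N).hom = (LC0 𝔞 M).hom ≫ LCm 𝔞 0 f := by
  have h := congrArg (cm 𝔞) (E0_nat f)
  rw [cm_comp, cm_comp] at h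
  exact h

/-- `H^0` is the torsion submodule -/
noncomputable def LCΓ (𝔞 : Ideal R) (M : ModuleCat.{u} R) : LC 𝔞 0 M ≅ ModuleCat.of R (Γ 𝔞 M) :=
  (LC0 𝔞 M).symm ≪≫ (LinearEquiv.ofBijective ((ev 𝔞 M).hom.codRestrict (Γ 𝔞 M) (ev_mem 𝔞 M))
    ⟨fun x y h => ev_inj 𝔞 M (congrArg Subtype.val h), fun x => by
      obtain ⟨y, hy⟩ := ev_surj 𝔞 M x.1 x.2
      exact ⟨y, Subtype.ext hy⟩⟩).toModuleIso

/-- surjectivity on torsion gives epi on LC 0 -/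
lemma LC0_epi (𝔞 : Ideal R) {M N : ModuleCat.{u} R} (f : M ⟶ N)
    (h : ∀ y ∈ Γ 𝔞 N, ∃ x ∈ Γ 𝔞 M, f.hom x = y) : Epi (LCm 𝔞 0 f) := by
  have h1 : Epi (G0m 𝔞 f) := by
    rw [ModuleCat.epi_iff_surjective]
    intro y
    obtain ⟨x, hx, hxy⟩ := h _ (ev_mem 𝔞 N y)
    obtain ⟨z, hz⟩ := ev_surj 𝔞 M x hx
    refine ⟨z, ev_inj 𝔞 N ?_⟩
    have := congrArg (fun k => k.hom z) (ev_nat 𝔞 f)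
    refine Eq.trans this ?_
    change f.hom ((ev 𝔞 M).hom z) = _
    rw [hz, hxy]
  have h2 : LCm 𝔞 0 f = (LC0 𝔞 M).inv ≫ G0m 𝔞 f ≫ (LC0 𝔞 N).hom := by
    rw [LC0_nat, Iso.inv_hom_id_assoc]
  rw [h2]
  infer_instance
end EvSec
end LCSerre

namespace LCSerre
section AlgSec
open Opposite
variable {R}

lemma Γ_fg (𝔞 : Ideal R) {M : Type u} [AddCommGroup M] [Module R M] (N : Submodule R M)
    (hN : N.FG) (h : N ≤ Γ 𝔞 M) : ∃ n : ℕ, ∀ a ∈ 𝔞 ^ n, ∀ x ∈ N, a • x = 0 := by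
  induction N, hN using Submodule.fg_induction with
  | singleton x =>
    obtain ⟨n, hn⟩ := h (Submodule.mem_span_singleton_self x)
    refine ⟨n, fun a ha y hy => ?_⟩
    obtain ⟨c, rfl⟩ := Submodule.mem_span_singleton.1 hy
    rw [smul_comm, hn a ha, smul_zero]
  | sup N₁ N₂ _ _ h1 h2 =>
    obtain ⟨n, hn⟩ := h1 (le_sup_left.trans h)
    obtain ⟨m, hm⟩ := h2 (le_sup_right.trans h)
    refine ⟨n + m, fun a ha y hy => ?_⟩
    obtain ⟨y₁, hy₁, y₂, hy₂, rfl⟩ := Submodule.mem_sup.1 hy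
    rw [smul_add, hn a (Ideal.pow_le_pow_right (Nat.le_add_right n m) ha) _ hy₁,
      hm a (Ideal.pow_le_pow_right (Nat.le_add_left m n) ha) _ hy₂, add_zero]

lemma Γ_quot [IsNoetherianRing R] (𝔞 : Ideal R) (M : Type u) [AddCommGroup M] [Module R M] :
    Γ 𝔞 (M ⧸ Γ 𝔞 M) = ⊥ := by
  rw [eq_bot_iff]
  rintro y ⟨n, hn⟩
  obtain ⟨x, rfl⟩ := Submodule.Quotient.mk_surjective _ y
  have hle : Submodule.map (LinearMap.toSpanSingleton R M x) (𝔞 ^ n) ≤ Γ 𝔞 M := by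
    rintro _ ⟨a, ha, rfl⟩
    have := hn a ha
    rw [← Submodule.Quotient.mk_smul, Submodule.Quotient.mk_eq_zero] at this
    exact this
  obtain ⟨k, hk⟩ := Γ_fg 𝔞 _ (Submodule.FG.map _ (IsNoetherian.noetherian (𝔞 ^ n))) hle
  rw [Submodule.mem_bot, Submodule.Quotient.mk_eq_zero]
  refine ⟨k + n, fun a ha => ?_⟩
  rw [pow_add] at ha
  refine Submodule.mul_induction_on ha (fun b hb c hc => ?_) (fun b c hb hc => ?_)
  · rw [mul_smul]
    exact hk b hb _ ⟨c, hc, rfl⟩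
  · rw [add_smul, hb, hc, add_zero]

lemma Γ_baer [IsNoetherianRing R] (𝔞 : Ideal R) (M : Type u) [AddCommGroup M] [Module R M]
    (hM : Module.Baer R M) : Module.Baer R (Γ 𝔞 M) := by
  intro I g
  let g₁ : I →ₗ[R] M := (Γ 𝔞 M).subtype.comp g
  obtain ⟨n, hn⟩ := Γ_fg 𝔞 (LinearMap.range g₁)
    (by rw [LinearMap.range_eq_map]; exact Submodule.FG.map _ Module.Finite.fg_top)
    (by rintro _ ⟨x, rfl⟩; exact (g x).2)
  obtain ⟨k, hk⟩ := Ideal.exists_pow_inf_eq_pow_smul 𝔞 (I : Submodule R R)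
  have key : ∀ x (hx : x ∈ I), x ∈ 𝔞 ^ (n + k) → g₁ ⟨x, hx⟩ = 0 := by
    intro x hx hx'
    have h1 : x ∈ 𝔞 ^ (n + k) • (⊤ : Submodule R R) ⊓ I := ⟨by simpa using hx', hx⟩
    rw [hk (n + k) (Nat.le_add_left k n), Nat.add_sub_cancel] at h1
    have h2 : x ∈ 𝔞 ^ n • (I : Submodule R R) := Submodule.smul_mono le_rfl inf_le_right h1
    have h3 : ∃ hx : x ∈ I, g₁ ⟨x, hx⟩ = 0 := by
      refine Submodule.smul_induction_on h2 (fun a ha b hb => ?_) ?_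
      · refine ⟨I.smul_mem a hb, ?_⟩
        have : (⟨a • b, I.smul_mem a hb⟩ : I) = a • ⟨b, hb⟩ := rfl
        rw [this, map_smul]
        exact hn a ha _ ⟨_, rfl⟩
      · rintro y z ⟨hy, hy'⟩ ⟨hz, hz'⟩
        refine ⟨I.add_mem hy hz, ?_⟩
        have : (⟨y + z, I.add_mem hy hz⟩ : I) = ⟨y, hy⟩ + ⟨z, hz⟩ := rfl
        rw [this, map_add, hy', hz', add_zero]
    exact h3.2
  let p : R →ₗ.[R] M := ⟨I, g₁⟩
  let q : R →ₗ.[R] M := ⟨(𝔞 ^ (n + k) : Ideal R), 0⟩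
  have hpq : ∀ (x : p.domain) (y : q.domain), (x : R) = y → p x = q y := by
    intro x y hxy
    refine (key x.1 x.2 ?_).trans rfl
    rw [hxy]; exact y.2
  obtain ⟨h, hh⟩ := hM (p.domain ⊔ q.domain) (p.sup q hpq).toFun
  have hp : ∀ x (hx : x ∈ I), h x = g₁ ⟨x, hx⟩ := fun x hx => by
    rw [hh x (Submodule.mem_sup_left hx)]
    exact ((LinearPMap.left_le_sup p q hpq).2 (x := ⟨x, hx⟩)
      (y := ⟨x, Submodule.mem_sup_left hx⟩) rfl).symm
  have hq : ∀ x (hx : x ∈ 𝔞 ^ (n + k)), h x = 0 := fun x hx => by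
    rw [hh x (Submodule.mem_sup_right hx)]
    exact ((LinearPMap.right_le_sup p q hpq).2 (x := ⟨x, hx⟩)
      (y := ⟨x, Submodule.mem_sup_right hx⟩) rfl).symm
  have h1 : ∀ x, h x ∈ Γ 𝔞 M := fun x => ⟨n + k, fun a ha => by
    rw [← map_smul]
    exact hq _ (Ideal.mul_mem_right _ _ ha)⟩
  exact ⟨h.codRestrict _ h1, fun x hx => Subtype.ext (hp x hx)⟩

lemma quot_baer [IsNoetherianRing R] (𝔞 : Ideal R) (M : Type u) [AddCommGroup M] [Module R M]
    (hM : Module.Baer R M) : Module.Baer R (M ⧸ Γ 𝔞 M) := by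
  have hi := (Γ_baer 𝔞 M hM).injective
  obtain ⟨r, hr⟩ := hi.out (Γ 𝔞 M).subtype (Γ 𝔞 M).injective_subtype LinearMap.id
  let s : (M ⧸ Γ 𝔞 M) →ₗ[R] M := Submodule.liftQ _ (LinearMap.id - (Γ 𝔞 M).subtype.comp r) (by
    intro x hx
    have := hr ⟨x, hx⟩
    simp only [LinearMap.mem_ker, LinearMap.sub_apply, LinearMap.comp_apply, LinearMap.id_apply]
    simp only [Submodule.subtype_apply, LinearMap.id_apply] at this
    rw [this]; simp)
  have hs : ∀ x, (Γ 𝔞 M).mkQ (s x) = x := by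
    intro x
    obtain ⟨x, rfl⟩ := Submodule.Quotient.mk_surjective _ x
    have : s (Submodule.Quotient.mk x) = x - (r x : M) := rfl
    rw [this, map_sub, Submodule.mkQ_apply, Submodule.mkQ_apply,
      (Submodule.Quotient.mk_eq_zero (Γ 𝔞 M) (x := (r x : M))).2 (r x).2, sub_zero]
  intro I g
  obtain ⟨h, hh⟩ := hM I (s.comp g)
  refine ⟨(Γ 𝔞 M).mkQ.comp h, fun x hx => ?_⟩
  rw [LinearMap.comp_apply, hh x hx, LinearMap.comp_apply, hs]

lemma inj_baer (M : ModuleCat.{u} R) [Injective M] : Module.Baer R M :=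
  Module.Baer.of_injective (Module.injective_module_of_injective_object R M)

lemma baer_inj (M : Type u) [AddCommGroup M] [Module R M] (h : Module.Baer R M) :
    Injective (ModuleCat.of R M) :=
  have := h.injective
  Module.injective_object_of_injective_module R M

lemma exists_tors [IsNoetherianRing R] (𝔞 : Ideal R) (T : ModuleCat.{u} R) (hT : Γ 𝔞 T = ⊤) :
    ∃ (I : ModuleCat.{u} R) (f : T ⟶ I), Mono f ∧ Injective I ∧ Γ 𝔞 I = ⊤ := by
  let Q := Injective.under T
  let j : T ⟶ Q := Injective.ι T
  have hj : Function.Injective j.hom := (ModuleCat.mono_iff_injective j).1 inferInstance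
  have hm : ∀ x, j.hom x ∈ Γ 𝔞 Q := fun x => by
    obtain ⟨n, hn⟩ : x ∈ Γ 𝔞 T := by rw [hT]; trivial
    exact ⟨n, fun a ha => by rw [← map_smul, hn a ha, map_zero]⟩
  refine ⟨ModuleCat.of R (Γ 𝔞 Q), ModuleCat.ofHom (j.hom.codRestrict _ hm), ?_,
    baer_inj _ (Γ_baer 𝔞 Q (inj_baer Q)), ?_⟩
  · rw [ModuleCat.mono_iff_injective]
    intro x y h
    exact hj (congrArg Subtype.val h)
  · rw [eq_top_iff]
    rintro ⟨x, n, hn⟩ -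
    exact ⟨n, fun a ha => Subtype.ext (hn a ha)⟩

lemma exists_free [IsNoetherianRing R] (𝔞 : Ideal R) (T : ModuleCat.{u} R) (hT : Γ 𝔞 T = ⊥) :
    ∃ (I : ModuleCat.{u} R) (f : T ⟶ I), Mono f ∧ Injective I ∧ Γ 𝔞 I = ⊥ := by
  let Q := Injective.under T
  let j : T ⟶ Q := Injective.ι T
  have hj : Function.Injective j.hom := (ModuleCat.mono_iff_injective j).1 inferInstance
  refine ⟨ModuleCat.of R (Q ⧸ Γ 𝔞 Q), ModuleCat.ofHom ((Γ 𝔞 Q).mkQ.comp j.hom), ?_,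
    baer_inj _ (quot_baer 𝔞 Q (inj_baer Q)), Γ_quot 𝔞 Q⟩
  rw [ModuleCat.mono_iff_injective]
  change Function.Injective ((Γ 𝔞 Q).mkQ.comp j.hom)
  rw [← LinearMap.ker_eq_bot, eq_bot_iff, ← hT]
  intro x hx
  rw [LinearMap.mem_ker, LinearMap.comp_apply, Submodule.mkQ_apply,
    Submodule.Quotient.mk_eq_zero] at hx
  obtain ⟨n, hn⟩ := hx
  refine ⟨n, fun a ha => hj ?_⟩
  rw [map_smul, hn a ha, map_zero]

lemma Γ_epi (𝔞 : Ideal R) {M N : ModuleCat.{u} R} (f : M ⟶ N) [Epi f] (h : Γ 𝔞 M = ⊤) :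
    Γ 𝔞 N = ⊤ := by
  rw [eq_top_iff]
  intro y _
  obtain ⟨x, rfl⟩ := (ModuleCat.epi_iff_surjective f).1 inferInstance y
  obtain ⟨n, hn⟩ : x ∈ Γ 𝔞 M := by rw [h]; trivial
  exact ⟨n, fun a ha => by
    have := congrArg f.hom (hn a ha)
    rwa [map_smul, map_zero] at this⟩

/-- quotient by the torsion -/
noncomputable def Γses (𝔞 : Ideal R) (M : ModuleCat.{u} R) : ShortComplex (ModuleCat.{u} R) :=
  ShortComplex.mk (X₁ := ModuleCat.of R (Γ 𝔞 M)) (X₂ := M) (X₃ := ModuleCat.of R (M ⧸ Γ 𝔞 M))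
    (ModuleCat.ofHom (Γ 𝔞 M).subtype) (ModuleCat.ofHom (Γ 𝔞 M).mkQ) (by ext x; simp)

lemma Γses_exact (𝔞 : Ideal R) (M : ModuleCat.{u} R) : (Γses 𝔞 M).ShortExact := by
  refine { exact := ?_, mono_f := ?_, epi_g := ?_ }
  · rw [ShortComplex.moduleCat_exact_iff]
    intro (x : M) hx
    have hx' : (Γ 𝔞 M).mkQ x = 0 := hx
    have h : x ∈ Γ 𝔞 M := by
      rwa [Submodule.mkQ_apply, Submodule.Quotient.mk_eq_zero] at hx'
    let y : Γ 𝔞 M := ⟨x, h⟩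
    exact ⟨y, rfl⟩
  · rw [ModuleCat.mono_iff_injective]
    have h := (Γ 𝔞 M).injective_subtype
    exact h
  · rw [ModuleCat.epi_iff_surjective]
    have h := Submodule.mkQ_surjective (Γ 𝔞 M)
    exact h

lemma Γ_Γ (𝔞 : Ideal R) (M : ModuleCat.{u} R) : Γ 𝔞 (Γ 𝔞 M) = ⊤ := by
  rw [eq_top_iff]
  rintro ⟨x, n, hn⟩ -
  exact ⟨n, fun a ha => Subtype.ext (hn a ha)⟩

/-- cokernel short exact sequence -/
noncomputable def cses {M N : ModuleCat.{u} R} (f : M ⟶ N) : ShortComplex (ModuleCat.{u} R) :=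
  ShortComplex.mk f (cokernel.π f) (cokernel.condition f)

lemma cses_exact {M N : ModuleCat.{u} R} (f : M ⟶ N) [Mono f] : (cses f).ShortExact :=
  { exact := ShortComplex.exact_cokernel f, mono_f := ‹_›, epi_g := by dsimp [cses]; infer_instance }

end AlgSec
end LCSerre

namespace LCSerre
section FactSec
open Opposite
variable {R}

/-- connecting maps on local cohomology -/
noncomputable def LCd (𝔞 : Ideal R) {S : ShortComplex (ModuleCat.{u} R)} (hS : S.ShortExact)
    (i : ℕ) : LC 𝔞 i S.X₃ ⟶ LC 𝔞 (i+1) S.X₁ := cm 𝔞 (Ed hS i)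

/-- exactness of a pair of maps -/
def Exx {A B C : ModuleCat.{u} R} (f : A ⟶ B) (g : B ⟶ C) : Prop :=
  ∃ w : f ≫ g = 0, (ShortComplex.mk f g w).Exact

lemma LC₂ (𝔞 : Ideal R) {S : ShortComplex (ModuleCat.{u} R)} (hS : S.ShortExact) (i : ℕ) :
    Exx (LCm 𝔞 i S.f) (LCm 𝔞 i S.g) := cm_exact 𝔞 (Ex₂ hS i)

lemma LC₃ (𝔞 : Ideal R) {S : ShortComplex (ModuleCat.{u} R)} (hS : S.ShortExact) (i : ℕ) :
    Exx (LCm 𝔞 i S.g) (LCd 𝔞 hS i) := cm_exact 𝔞 (Ex₃ hS i)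

lemma LC₁ (𝔞 : Ideal R) {S : ShortComplex (ModuleCat.{u} R)} (hS : S.ShortExact) (i : ℕ) :
    Exx (LCd 𝔞 hS i) (LCm 𝔞 (i+1) S.f) := cm_exact 𝔞 (Ex₁ hS i)

lemma Exx.mono {A B C : ModuleCat.{u} R} {f : A ⟶ B} {g : B ⟶ C} (h : Exx f g) (hA : IsZero A) :
    Mono g := by
  obtain ⟨w, h⟩ := h
  exact h.mono_g (hA.eq_of_src _ _)

lemma Exx.epi {A B C : ModuleCat.{u} R} {f : A ⟶ B} {g : B ⟶ C} (h : Exx f g) (hC : IsZero C) :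
    Epi f := by
  obtain ⟨w, h⟩ := h
  exact h.epi_f (hC.eq_of_tgt _ _)

lemma iso_of {A B C D : ModuleCat.{u} R} {f : A ⟶ B} {g : B ⟶ C} {h : C ⟶ D} (h1 : Exx f g)
    (h2 : Exx g h) (hA : IsZero A) (hD : IsZero D) : Nonempty (B ≅ C) := by
  have := h1.mono hA
  have := h2.epi hD
  have := isIso_of_mono_of_epi g
  exact ⟨asIso g⟩

lemma zero_of {A B C D : ModuleCat.{u} R} {f : A ⟶ B} {g : B ⟶ C} {h : C ⟶ D} (h1 : Exx f g)
    (h2 : Exx g h) (hf : Epi f) (hD : IsZero D) : IsZero C := by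
  have := h2.epi hD
  obtain ⟨w, _⟩ := h1
  exact IsZero.of_epi_eq_zero g (zero_of_epi_comp f w)

lemma LC_inj (𝔞 : Ideal R) (I : ModuleCat.{u} R) [Injective I] (i : ℕ) : IsZero (LC 𝔞 (i+1) I) :=
  LC_zero_of 𝔞 _ (fun _ => E_injective i I _)

lemma E_free (𝔞 : Ideal R) (I : ModuleCat.{u} R) [Injective I] (hI : Γ 𝔞 I = ⊥) (i n : ℕ) :
    IsZero ((E i I).obj (op (ModuleCat.of R (R ⧸ 𝔞 ^ n)))) := by
  cases i with
  | succ i => exact E_injective i I _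
  | zero =>
    refine IsZero.of_iso ?_ ((E0 I).app _).symm
    have h : ∀ g : ModuleCat.of R (R ⧸ 𝔞 ^ n) ⟶ I, g = 0 := fun g => by
      have : (evl (𝔞 ^ n) I).hom g ∈ Γ 𝔞 I := ⟨n, fun a ha => evl_kill _ _ g a ha⟩
      rw [hI, Submodule.mem_bot] at this
      exact evl_inj _ _ _ _ (this.trans (map_zero _).symm)
    have : Subsingleton (((linearYoneda R (ModuleCat.{u} R)).obj I).obj
        (op (ModuleCat.of R (R ⧸ 𝔞 ^ n)))) :=
      ⟨fun (x : ModuleCat.of R (R ⧸ 𝔞 ^ n) ⟶ I) (y : ModuleCat.of R (R ⧸ 𝔞 ^ n) ⟶ I) =>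
        (h x).trans (h y).symm⟩
    exact ModuleCat.isZero_of_subsingleton _

lemma LC_free (𝔞 : Ideal R) (I : ModuleCat.{u} R) [Injective I] (hI : Γ 𝔞 I = ⊥) (i : ℕ) :
    IsZero (LC 𝔞 i I) :=
  LC_zero_of 𝔞 _ (fun n => E_free 𝔞 I hI i n)

lemma factC [IsNoetherianRing R] (𝔞 : Ideal R) (i : ℕ) : ∀ (T : ModuleCat.{u} R),
    Γ 𝔞 T = ⊤ → IsZero (LC 𝔞 (i+1) T) := by
  induction i with
  | zero =>
    intro T hT
    obtain ⟨I, f, hf, hI, hΓ⟩ := exists_tors 𝔞 T hT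
    refine zero_of (LC₃ 𝔞 (cses_exact f) 0) (LC₁ 𝔞 (cses_exact f) 0) ?_ (LC_inj 𝔞 I 0)
    refine LC0_epi 𝔞 (cokernel.π f) (fun y _ => ?_)
    obtain ⟨x, hx⟩ := (ModuleCat.epi_iff_surjective (cokernel.π f)).1 inferInstance y
    exact ⟨x, by rw [hΓ]; trivial, hx⟩
  | succ i ih =>
    intro T hT
    obtain ⟨I, f, hf, hI, hΓ⟩ := exists_tors 𝔞 T hT
    refine zero_of (LC₃ 𝔞 (cses_exact f) (i+1)) (LC₁ 𝔞 (cses_exact f) (i+1)) ?_ (LC_inj 𝔞 I (i+1))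
    have hz : IsZero (LC 𝔞 (i+1) (cokernel f)) := ih _ (Γ_epi 𝔞 (cokernel.π f) hΓ)
    exact ⟨fun _ _ _ => hz.eq_of_src _ _⟩

lemma factB [IsNoetherianRing R] (𝔞 : Ideal R) (i : ℕ) (M : ModuleCat.{u} R) :
    Nonempty (LC 𝔞 (i+1) M ≅ LC 𝔞 (i+1) (ModuleCat.of R (M ⧸ Γ 𝔞 M))) :=
  iso_of (LC₂ 𝔞 (Γses_exact 𝔞 M) (i+1)) (LC₃ 𝔞 (Γses_exact 𝔞 M) (i+1))
    (factC 𝔞 i _ (Γ_Γ 𝔞 M)) (factC 𝔞 (i+1) _ (Γ_Γ 𝔞 M))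

lemma factA (𝔞 : Ideal R) (i : ℕ) {M I : ModuleCat.{u} R} (f : M ⟶ I) [Mono f] [Injective I]
    (hI : Γ 𝔞 I = ⊥) : Nonempty (LC 𝔞 i (cokernel f) ≅ LC 𝔞 (i+1) M) :=
  iso_of (LC₃ 𝔞 (cses_exact f) i) (LC₁ 𝔞 (cses_exact f) i) (LC_free 𝔞 I hI i)
    (LC_free 𝔞 I hI (i+1))

lemma P_iso (S : SerreClass R) {X Y : ModuleCat.{u} R} (e : X ≅ Y) (h : S.P X) : S.P Y :=
  S.mem_of_mono e.inv inferInstance h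

lemma P_exact (S : SerreClass R) {A B C : ModuleCat.{u} R} {f : A ⟶ B} {g : B ⟶ C} (h : Exx f g)
    (hA : S.P A) (hC : S.P C) : S.P B := by
  obtain ⟨w, h⟩ := h
  let T : ShortComplex (ModuleCat.{u} R) := ShortComplex.mk (kernel.ι g) (factorThruImage g)
    (by rw [← cancel_mono (image.ι g)]; simp)
  have hT : T.ShortExact := by
    refine { exact := ?_, mono_f := ?_, epi_g := ?_ }
    · refine ShortComplex.exact_of_f_is_kernel _ ?_
      exact isKernelOfComp (image.ι g) g (kernelIsKernel g) _ (image.fac g)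
    · dsimp [T]; infer_instance
    · dsimp [T]; infer_instance
  have h1 : S.P (kernel g) := by
    have : Epi (kernel.lift g f w) := h.epi_kernelLift
    exact S.mem_of_epi (kernel.lift g f w) this hA
  have h2 : S.P (Limits.image g) := S.mem_of_mono (image.ι g) inferInstance hC
  exact S.mem_of_extension T hT h1 h2

/-- Ext respects isomorphisms in the second variable -/
noncomputable def E_iso (j : ℕ) (X) {Y Z : ModuleCat.{u} R} (e : Y ≅ Z) :
    (E j Y).obj (op X) ≅ (E j Z).obj (op X) :=
  ((Ext R (ModuleCat.{u} R) j).obj (op X)).mapIso e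

lemma E0_mono (X) {Y Z : ModuleCat.{u} R} (f : Y ⟶ Z) [Mono f] : Mono ((Em 0 f).app X) := by
  have h := congr_app (E0_nat f) X
  have h2 : (Em 0 f).app X = (E0 Y).inv.app X ≫
      ((linearYoneda R (ModuleCat.{u} R)).map f).app X ≫ (E0 Z).hom.app X := by
    refine Eq.symm ((congrArg ((E0 Y).inv.app X ≫ ·) h).trans ?_)
    change (E0 Y).inv.app X ≫ (E0 Y).hom.app X ≫ (Em 0 f).app X = _
    rw [← Category.assoc, Iso.inv_hom_id_app, Category.id_comp]
  have : Mono (((linearYoneda R (ModuleCat.{u} R)).map f).app X) := by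
    rw [ModuleCat.mono_iff_injective]
    intro (x : X.unop ⟶ Y) (y : X.unop ⟶ Y) hxy
    exact (cancel_mono f).1 hxy
  have m1 : Mono ((E0 Y).inv.app X) := IsIso.mono_of_iso ((E0 Y).app X).inv
  have m2 : Mono ((E0 Z).hom.app X) := IsIso.mono_of_iso ((E0 Z).app X).hom
  have m3 := @mono_comp _ _ _ _ _ (((linearYoneda R (ModuleCat.{u} R)).map f).app X) this
    ((E0 Z).hom.app X) m2
  have m4 := @mono_comp _ _ _ _ _ _ m1 _ m3
  rw [h2]
  exact m4

lemma main [IsNoetherianRing R] (𝔞 : Ideal R) (S : SerreClass R) (s : ℕ) : ∀ (M : ModuleCat.{u} R)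
    (_ : S.P ((E s M).obj (op (ModuleCat.of R (R ⧸ 𝔞)))))
    (_ : ∀ i < s, ∀ j : ℕ, S.P ((E j (LC 𝔞 i M)).obj (op (ModuleCat.of R (R ⧸ 𝔞))))),
    S.P ((E 0 (LC 𝔞 s M)).obj (op (ModuleCat.of R (R ⧸ 𝔞)))) := by
  induction s with
  | zero =>
    intro M h1 _
    refine P_iso S (E_iso 0 _ (LCΓ 𝔞 M).symm) ?_
    have := (Γses_exact 𝔞 M).mono_f
    exact S.mem_of_mono ((Em 0 (Γses 𝔞 M).f).app _) (E0_mono _ _) h1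
  | succ s ih =>
    intro M h1 h2
    have h3 : S.P ((E (s+2) (ModuleCat.of R (Γ 𝔞 M))).obj (op (ModuleCat.of R (R ⧸ 𝔞)))) :=
      P_iso S (E_iso _ _ (LCΓ 𝔞 M)) (h2 0 (Nat.succ_pos s) (s+2))
    have h4 : S.P ((E (s+1) (ModuleCat.of R (M ⧸ Γ 𝔞 M))).obj (op (ModuleCat.of R (R ⧸ 𝔞)))) := by
      obtain ⟨w, hw⟩ := Ex₃ (Γses_exact 𝔞 M) (s+1)
      exact P_exact S ⟨_, hw (op (ModuleCat.of R (R ⧸ 𝔞)))⟩ h1 h3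
    obtain ⟨I, f, hf, hI, hΓ⟩ := exists_free 𝔞 (ModuleCat.of R (M ⧸ Γ 𝔞 M)) (Γ_quot 𝔞 M)
    have h5 : S.P ((E s (cokernel f)).obj (op (ModuleCat.of R (R ⧸ 𝔞)))) := by
      obtain ⟨w, hw⟩ := Ex₃ (cses_exact f) s
      have hz := E_free 𝔞 I hΓ s 1
      rw [pow_one] at hz
      have hm : Mono ((Ed (cses_exact f) s).app (op (ModuleCat.of R (R ⧸ 𝔞)))) :=
        Exx.mono ⟨_, hw (op (ModuleCat.of R (R ⧸ 𝔞)))⟩ hz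
      exact S.mem_of_mono _ hm h4
    have e : ∀ i, Nonempty (LC 𝔞 i (cokernel f) ≅ LC 𝔞 (i+1) M) := fun i => by
      obtain ⟨e₁⟩ := factA 𝔞 i f hΓ
      obtain ⟨e₂⟩ := factB 𝔞 i M
      exact ⟨e₁ ≪≫ e₂.symm⟩
    obtain ⟨es⟩ := e s
    refine P_iso S (E_iso 0 _ es) (ih _ h5 (fun i hi j => ?_))
    obtain ⟨ei⟩ := e i
    exact P_iso S (E_iso j _ ei.symm) (h2 (i+1) (Nat.succ_lt_succ hi) j)

end FactSec
end LCSerre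

theorem stmt3 [IsNoetherianRing R] (𝔞 : Ideal R) (S : SerreClass R) (s : ℕ)
    (M : ModuleCat.{u} R)
    (h1 : S.P (extModule R s (ModuleCat.of R (R ⧸ 𝔞)) M))
    (h2 : ∀ i < s, ∀ j : ℕ,
      S.P (extModule R j (ModuleCat.of R (R ⧸ 𝔞)) ((localCohomology 𝔞 i).obj M))) :
    S.P (ModuleCat.of R ((R ⧸ 𝔞) →ₗ[R] ((localCohomology 𝔞 s).obj M))) := by
  have h := LCSerre.main 𝔞 S s M h1
    (fun i hi j => LCSerre.P_iso S (LCSerre.E_iso j _ (LCSerre.LCiso 𝔞 i M)) (h2 i hi j))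
  have h' := LCSerre.P_iso S (LCSerre.E_iso 0 _ (LCSerre.LCiso 𝔞 s M).symm) h
  have h'' := LCSerre.P_iso S ((LCSerre.E0 ((localCohomology 𝔞 s).obj M)).app _).symm h'
  exact LCSerre.P_iso S (ModuleCat.homLinearEquiv (S := R)
    (M := ModuleCat.of R (R ⧸ 𝔞)) (N := (localCohomology 𝔞 s).obj M)).toModuleIso h''
end

section
/- Let R be a Noetherian ring, 𝔞 an ideal, S a Serre subcategory of the category of R-modules, s ≥ 0, and M an R-module such that Ext^{s+1}_R(R/𝔞, M) ∈ S. If Ext^j_R(R/𝔞, H^i_𝔞(M)) ∈ S for all i < s and all j ≥ 0, then Ext^1_R(R/𝔞, H^s_𝔞(M)) ∈ S. -/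
open CategoryTheory

universe u

variable (R : Type u) [CommRing R]

section LES
open CategoryTheory Limits
variable {C D : Type*} [Category C] [Abelian C] [HasProjectiveResolutions C]
  [Category D] [Abelian D]

/-- exactness of two composable morphisms -/
def Ex {X Y Z : D} (f : X ⟶ Y) (g : Y ⟶ Z) : Prop :=
  ∃ w : f ≫ g = 0, (ShortComplex.mk f g w).Exact

lemma Ex.of_iso {X Y Z X' Y' Z' : D} {f : X ⟶ Y} {g : Y ⟶ Z} {f' : X' ⟶ Y'} {g' : Y' ⟶ Z'}
    (h : Ex f g) (a : X ≅ X') (b : Y ≅ Y') (c : Z ≅ Z')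
    (hf : f' = a.inv ≫ f ≫ b.hom) (hg : g' = b.inv ≫ g ≫ c.hom) : Ex f' g' := by
  obtain ⟨w, h⟩ := h
  subst hf hg
  refine ⟨by simp [reassoc_of% w], ?_⟩
  refine ShortComplex.exact_of_iso (ShortComplex.isoMk a b c ?_ ?_) h
  · simp
  · simp

omit [Abelian D] in
lemma nat_aux {A B A' B' K K' L L' : D} {f1 : A ⟶ A'} {f2 : B ⟶ B'} {h : A ⟶ K} {h' : A' ⟶ K'}
    {i : L ⟶ B} {i' : L' ⟶ B'} {m1 : K ⟶ K'} {m2 : L ⟶ L'} {d : K ⟶ L} {d' : K' ⟶ L'}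
    (e1 : f1 ≫ h' = h ≫ m1) (e2 : i ≫ f2 = m2 ≫ i') (e3 : d ≫ m2 = m1 ≫ d') :
    f1 ≫ h' ≫ d' ≫ i' = (h ≫ d ≫ i) ≫ f2 := by
  rw [reassoc_of% e1, Category.assoc, Category.assoc, e2, reassoc_of% e3]

omit [Abelian D] in
lemma nat_aux2 {A A' K K' O O' X X' : D} {l : A ⟶ A'} {a : A ≅ K} {a' : A' ≅ K'} {m : K ⟶ K'}
    {g : A ⟶ X} {g' : A' ⟶ X'} {i : K ⟶ O} {i' : K' ⟶ O'} {p : O ⟶ X} {p' : O' ⟶ X'}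
    {o : O ⟶ O'} {x : X ⟶ X'}
    (e1 : l = a.hom ≫ m ≫ a'.inv) (e2 : g = a.hom ≫ i ≫ p) (e3 : g' = a'.hom ≫ i' ≫ p')
    (e4 : m ≫ i' = i ≫ o) (e5 : o ≫ p' = p ≫ x) : l ≫ g' = g ≫ x := by
  subst e1 e2 e3
  simp [reassoc_of% e4, e5]

variable {F G H : C ⥤ D} [F.Additive] [G.Additive] [H.Additive]

/-- the short complex of chain complexes -/
noncomputable def ldSC (α : F ⟶ G) (β : G ⟶ H) (w : α ≫ β = 0) (K : ChainComplex C ℕ) :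
    ShortComplex (ChainComplex D ℕ) :=
  ShortComplex.mk ((NatTrans.mapHomologicalComplex α _).app K)
    ((NatTrans.mapHomologicalComplex β _).app K) (by
      ext i
      exact congr_arg (fun t => t.app (K.X i)) w)

omit [HasProjectiveResolutions C] in
lemma ldSC_shortExact (α : F ⟶ G) (β : G ⟶ H) (w : α ≫ β = 0)
    (hex : ∀ (P : C) [Projective P], (ShortComplex.mk (α.app P) (β.app P)
      (by rw [← NatTrans.comp_app, w]; rfl)).ShortExact)
    (K : ChainComplex C ℕ) (hK : ∀ i, Projective (K.X i)) : (ldSC α β w K).ShortExact := by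
  refine HomologicalComplex.shortExact_of_degreewise_shortExact _ (fun i => ?_)
  have := hK i
  exact hex (K.X i)

noncomputable def ldSCmap (α : F ⟶ G) (β : G ⟶ H) (w : α ≫ β = 0) {K L : ChainComplex C ℕ}
    (f : K ⟶ L) : ldSC α β w K ⟶ ldSC α β w L where
  τ₁ := (F.mapHomologicalComplex _).map f
  τ₂ := (G.mapHomologicalComplex _).map f
  τ₃ := (H.mapHomologicalComplex _).map f
  comm₁₂ := by simp [ldSC]
  comm₂₃ := by simp [ldSC]

lemma leftDerived_les (α : F ⟶ G) (β : G ⟶ H) (w : α ≫ β = 0)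
    (hex : ∀ (P : C) [Projective P], (ShortComplex.mk (α.app P) (β.app P)
      (by rw [← NatTrans.comp_app, w]; rfl)).ShortExact) (n : ℕ) :
    ∃ δ : H.leftDerived (n+1) ⟶ F.leftDerived n, ∀ X : C,
      Ex ((NatTrans.leftDerived α n).app X) ((NatTrans.leftDerived β n).app X) ∧
      Ex ((NatTrans.leftDerived β (n+1)).app X) (δ.app X) ∧
      Ex (δ.app X) ((NatTrans.leftDerived α n).app X) := by
  have hS : ∀ X : C, (ldSC α β w (projectiveResolution X).complex).ShortExact := fun X =>
    ldSC_shortExact α β w hex _ (fun i => inferInstance)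
  refine ⟨{ app := fun X => ((projectiveResolution X).isoLeftDerivedObj H (n+1)).hom ≫
      (hS X).δ (n+1) n (by simp) ≫ ((projectiveResolution X).isoLeftDerivedObj F n).inv
            naturality := ?_ }, ?_⟩
  · intro X Y f
    let φ := ProjectiveResolution.lift f (projectiveResolution X) (projectiveResolution Y)
    have hφ := ProjectiveResolution.lift_commutes_zero f (projectiveResolution X)
      (projectiveResolution Y)
    exact nat_aux (ProjectiveResolution.isoLeftDerivedObj_hom_naturality f _ _ φ hφ H (n+1))
      (ProjectiveResolution.isoLeftDerivedObj_inv_naturality f _ _ φ hφ F n)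
      (HomologicalComplex.HomologySequence.δ_naturality (ldSCmap α β w φ) (hS X) (hS Y)
        (n+1) n (by simp))
  · intro X
    refine ⟨?_, ?_, ?_⟩
    · refine Ex.of_iso ⟨_, (hS X).homology_exact₂ n⟩
        ((projectiveResolution X).isoLeftDerivedObj F n).symm
        ((projectiveResolution X).isoLeftDerivedObj G n).symm
        ((projectiveResolution X).isoLeftDerivedObj H n).symm
        (ProjectiveResolution.leftDerived_app_eq _ _ _)
        (ProjectiveResolution.leftDerived_app_eq _ _ _)
    · refine Ex.of_iso ⟨_, (hS X).homology_exact₃ (n+1) n (by simp)⟩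
        ((projectiveResolution X).isoLeftDerivedObj G (n+1)).symm
        ((projectiveResolution X).isoLeftDerivedObj H (n+1)).symm
        ((projectiveResolution X).isoLeftDerivedObj F n).symm
        (ProjectiveResolution.leftDerived_app_eq _ _ _) rfl
    · refine Ex.of_iso ⟨_, (hS X).homology_exact₁ (n+1) n (by simp)⟩
        ((projectiveResolution X).isoLeftDerivedObj H (n+1)).symm
        ((projectiveResolution X).isoLeftDerivedObj F n).symm
        ((projectiveResolution X).isoLeftDerivedObj G n).symm
        rfl (ProjectiveResolution.leftDerived_app_eq _ _ _)

lemma fromLeftDerivedZero_nat (α : F ⟶ G) (X : C) :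
    (NatTrans.leftDerived α 0).app X ≫ G.fromLeftDerivedZero.app X =
      F.fromLeftDerivedZero.app X ≫ α.app X := by
  have h1 := HomologicalComplex.homologyι_naturality
    ((NatTrans.mapHomologicalComplex α (ComplexShape.down ℕ)).app (projectiveResolution X).complex) 0
  have h2 : HomologicalComplex.opcyclesMap
      ((NatTrans.mapHomologicalComplex α (ComplexShape.down ℕ)).app
        (projectiveResolution X).complex) 0 ≫ (projectiveResolution X).fromLeftDerivedZero' G =
      (projectiveResolution X).fromLeftDerivedZero' F ≫ α.app X := by
    rw [← cancel_epi (HomologicalComplex.pOpcycles _ _)]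
    rw [HomologicalComplex.p_opcyclesMap_assoc]
    erw [ProjectiveResolution.pOpcycles_comp_fromLeftDerivedZero',
      ProjectiveResolution.pOpcycles_comp_fromLeftDerivedZero'_assoc]
    exact (α.naturality _).symm
  exact nat_aux2 (ProjectiveResolution.leftDerived_app_eq α (projectiveResolution X) 0)
    ((projectiveResolution X).fromLeftDerivedZero_eq F)
    ((projectiveResolution X).fromLeftDerivedZero_eq G) h1 h2
end LES

section ExtLES
open CategoryTheory Limits

lemma Ex.unop {D : Type*} [Category D] [Abelian D] {X Y Z : Dᵒᵖ} {f : X ⟶ Y} {g : Y ⟶ Z}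
    (h : Ex f g) : Ex g.unop f.unop := by
  obtain ⟨w, h⟩ := h
  exact ⟨by rw [← unop_comp, w]; rfl, h.unop⟩

variable {R}

/-- The functor whose left derived functors define Ext. -/
noncomputable abbrev FF (Y : ModuleCat.{u} R) : ModuleCat.{u} R ⥤ (ModuleCat.{u} R)ᵒᵖ :=
  ((linearYoneda R (ModuleCat.{u} R)).obj Y).rightOp

noncomputable abbrev FFmap {Y Z : ModuleCat.{u} R} (f : Y ⟶ Z) : FF Z ⟶ FF Y :=
  NatTrans.rightOp ((linearYoneda R (ModuleCat.{u} R)).map f)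

lemma FF_exact (S : ShortComplex (ModuleCat.{u} R)) (hS : S.ShortExact)
    (P : ModuleCat.{u} R) [Projective P] (w : (FFmap S.g).app P ≫ (FFmap S.f).app P = 0) :
    (ShortComplex.mk ((FFmap S.g).app P) ((FFmap S.f).app P) w).ShortExact := by
  have := hS.mono_f
  have := hS.epi_g
  have h : (ShortComplex.mk (((linearYoneda R (ModuleCat.{u} R)).map S.f).app (Opposite.op P))
     (((linearYoneda R (ModuleCat.{u} R)).map S.g).app (Opposite.op P))
       (congr_arg Quiver.Hom.unop w)).ShortExact := by
    refine ShortComplex.ShortExact.mk' ?_ ?_ ?_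
    · rw [ShortComplex.moduleCat_exact_iff]
      intro (x : P ⟶ S.X₂) (hx : x ≫ S.g = 0)
      exact ⟨hS.exact.lift x hx, hS.exact.lift_f x hx⟩
    · rw [ModuleCat.mono_iff_injective]
      intro (x : P ⟶ S.X₁) (y : P ⟶ S.X₁) (hxy : x ≫ S.f = y ≫ S.f)
      exact (cancel_mono S.f).1 hxy
    · rw [ModuleCat.epi_iff_surjective]
      intro (x : P ⟶ S.X₃)
      exact ⟨(Projective.factorThru x S.g : P ⟶ S.X₂), Projective.factorThru_comp x S.g⟩
  exact h.op

lemma Ext_les (S : ShortComplex (ModuleCat.{u} R)) (hS : S.ShortExact) (n : ℕ) :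
    ∃ δ : (Ext R (ModuleCat.{u} R) n).flip.obj S.X₃ ⟶
        (Ext R (ModuleCat.{u} R) (n+1)).flip.obj S.X₁, ∀ X : (ModuleCat.{u} R)ᵒᵖ,
      Ex (((Ext R (ModuleCat.{u} R) n).obj X).map S.f)
        (((Ext R (ModuleCat.{u} R) n).obj X).map S.g) ∧
      Ex (((Ext R (ModuleCat.{u} R) n).obj X).map S.g) (δ.app X) ∧
      Ex (δ.app X) (((Ext R (ModuleCat.{u} R) (n+1)).obj X).map S.f) := by
  have w : FFmap S.g ≫ FFmap S.f = 0 := by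
    ext P
    apply Quiver.Hom.unop_inj
    ext (x : P ⟶ S.X₁)
    change (x ≫ S.f) ≫ S.g = 0
    simp
  obtain ⟨δ, hδ⟩ := leftDerived_les (FFmap S.g) (FFmap S.f) w
    (fun P _ => FF_exact S hS P _) n
  exact ⟨NatTrans.leftOp δ, fun X => ⟨(hδ X.unop).1.unop, (hδ X.unop).2.2.unop,
    (hδ X.unop).2.1.unop⟩⟩

/-- Ext vanishes on injectives -/
lemma Ext_injective_zero (X I : ModuleCat.{u} R) [Injective I] (n : ℕ) :
    IsZero (((Ext R (ModuleCat.{u} R) (n+1)).obj (Opposite.op X)).obj I) := by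
  refine IsZero.of_iso ?_ ((projectiveResolution X).isoExt (n + 1) I)
  rw [← HomologicalComplex.exactAt_iff_isZero_homology,
    HomologicalComplex.exactAt_iff' _ n (n+1) (n+2) (by simp) (by simp),
    ShortComplex.moduleCat_exact_iff]
  intro (x : (projectiveResolution X).complex.X (n+1) ⟶ I)
    (hx : (projectiveResolution X).complex.d (n+2) (n+1) ≫ x = 0)
  have he := (projectiveResolution X).complex_exactAt_succ n
  rw [HomologicalComplex.exactAt_iff' _ (n+2) (n+1) n (by simp) (by simp)] at he
  exact ⟨he.descToInjective x hx, he.comp_descToInjective x hx⟩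

instance FF_pres (Y : ModuleCat.{u} R) : PreservesFiniteColimits (FF Y) := by
  have : PreservesLimits ((linearYoneda R (ModuleCat.{u} R)).obj Y ⋙
      forget (ModuleCat.{u} R)) := by
    change PreservesLimits (yoneda.obj Y)
    infer_instance
  have : PreservesFiniteLimits ((linearYoneda R (ModuleCat.{u} R)).obj Y ⋙
      forget (ModuleCat.{u} R)) := PreservesLimits.preservesFiniteLimits _
  have : PreservesFiniteLimits ((linearYoneda R (ModuleCat.{u} R)).obj Y) :=
    ⟨fun J _ _ => preservesLimitsOfShape_of_reflects_of_preserves _ (forget (ModuleCat.{u} R))⟩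
  exact preservesFiniteColimits_rightOp _

/-- Ext in degree zero is Hom -/
noncomputable def ext0 (X Y : ModuleCat.{u} R) :
    ((Ext R (ModuleCat.{u} R) 0).obj (Opposite.op X)).obj Y ≅ ModuleCat.of R (X ⟶ Y) :=
  ((FF Y).leftDerivedZeroIsoSelf.app X).unop.symm

lemma ext0_nat_left {X X' : ModuleCat.{u} R} (f : X ⟶ X') (Y : ModuleCat.{u} R) :
    ((Ext R (ModuleCat.{u} R) 0).map f.op).app Y ≫ (ext0 X Y).hom =
      (ext0 X' Y).hom ≫ ((linearYoneda R (ModuleCat.{u} R)).obj Y).map f.op := by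
  have := (FF Y).leftDerivedZeroIsoSelf.inv.naturality f
  exact (congr_arg Quiver.Hom.unop this).symm

lemma nat_aux3 {D : Type*} [Category D] {A A' B B' : D} (a : A ≅ B) (a' : A' ≅ B')
    {f : A ⟶ A'} {g : B ⟶ B'} (h : a.inv ≫ f = g ≫ a'.inv) : f ≫ a'.hom = a.hom ≫ g := by
  rw [← Iso.inv_comp_eq, ← Category.assoc, h]
  simp

lemma ext0_nat_right {Y Y' : ModuleCat.{u} R} (f : Y ⟶ Y') (X : ModuleCat.{u} R) :
    ((Ext R (ModuleCat.{u} R) 0).obj (Opposite.op X)).map f ≫ (ext0 X Y').hom =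
      (ext0 X Y).hom ≫ ((linearYoneda R (ModuleCat.{u} R)).map f).app (Opposite.op X) := by
  have := congr_arg Quiver.Hom.unop (fromLeftDerivedZero_nat (FFmap f) X)
  exact nat_aux3 ((FF Y).leftDerivedZeroIsoSelf.app X).unop.symm
    ((FF Y').leftDerivedZeroIsoSelf.app X).unop.symm this
end ExtLES

section LC
open CategoryTheory Limits
variable {R}

/-- evaluation at one, on Hom -/
noncomputable def ev1 (J : Ideal R) (Y : ModuleCat.{u} R) :
    ModuleCat.of R (ModuleCat.of R (R ⧸ J) ⟶ Y) ⟶ Y :=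
  ModuleCat.ofHom
    { toFun := fun g => g.hom (Ideal.Quotient.mk J 1)
      map_add' := fun _ _ => rfl
      map_smul' := fun _ _ => rfl }

noncomputable def ev0 (J : Ideal R) (Y : ModuleCat.{u} R) :
    ((Ext R (ModuleCat.{u} R) 0).obj (Opposite.op (ModuleCat.of R (R ⧸ J)))).obj Y ⟶ Y :=
  (ext0 (ModuleCat.of R (R ⧸ J)) Y).hom ≫ ev1 J Y

lemma ev1_injective (J : Ideal R) (Y : ModuleCat.{u} R) : Function.Injective (ev1 J Y) := by
  intro (g : ModuleCat.of R (R ⧸ J) ⟶ Y) (h : ModuleCat.of R (R ⧸ J) ⟶ Y)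
    (hgh : g.hom (Ideal.Quotient.mk J 1) = h.hom (Ideal.Quotient.mk J 1))
  apply ModuleCat.hom_ext
  apply LinearMap.ext
  intro (x : R ⧸ J)
  obtain ⟨r, rfl⟩ := Ideal.Quotient.mk_surjective x
  have : (Ideal.Quotient.mk J r : R ⧸ J) = r • (Ideal.Quotient.mk J 1 : R ⧸ J) := by
    rw [map_one, Algebra.smul_def, mul_one]; rfl
  rw [this, map_smul, map_smul, hgh]

lemma ev0_injective (J : Ideal R) (Y : ModuleCat.{u} R) : Function.Injective (ev0 J Y) := by
  have h : Function.Injective (ext0 (ModuleCat.of R (R ⧸ J)) Y).hom :=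
    (ModuleCat.mono_iff_injective _).1 inferInstance
  intro x y hxy
  exact h (ev1_injective J Y hxy)

lemma ev0_smul (J : Ideal R) (Y : ModuleCat.{u} R) (x) (r : R) (hr : r ∈ J) :
    r • ev0 J Y x = 0 := by
  have : ∀ g : ModuleCat.of R (R ⧸ J) ⟶ Y, r • g.hom (Ideal.Quotient.mk J 1) = 0 := by
    intro g
    rw [← map_smul]
    have : r • (Ideal.Quotient.mk J 1 : R ⧸ J) = 0 := by
      rw [map_one, Algebra.smul_def, mul_one]; exact Ideal.Quotient.eq_zero_iff_mem.2 hr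
    erw [this]
    exact map_zero g.hom
  exact this _

lemma ev0_surj (J : Ideal R) (Y : ModuleCat.{u} R) (y : Y) (h : ∀ r ∈ J, r • y = 0) :
    ∃ x, ev0 J Y x = y := by
  let g : ModuleCat.of R (R ⧸ J) ⟶ Y := ModuleCat.ofHom
    (Submodule.liftQ J (LinearMap.toSpanSingleton R Y y) (fun r hr => h r hr))
  refine ⟨(ext0 (ModuleCat.of R (R ⧸ J)) Y).inv g, ?_⟩
  have e : (ext0 (ModuleCat.of R (R ⧸ J)) Y).hom
     ((ext0 (ModuleCat.of R (R ⧸ J)) Y).inv g) = g := by simp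
  change ev1 J Y ((ext0 (ModuleCat.of R (R ⧸ J)) Y).hom
     ((ext0 (ModuleCat.of R (R ⧸ J)) Y).inv g)) = y
  rw [e]
  exact one_smul R y

lemma nat_aux4 {D : Type*} [Category D] {A A1 B B1 E E1 : D} {f : A ⟶ A1} {a : A ⟶ B}
    {a1 : A1 ⟶ B1} {g : B ⟶ B1} {b : B ⟶ E} {b1 : B1 ⟶ E1} {h : E ⟶ E1}
    (e1 : f ≫ a1 = a ≫ g) (e2 : g ≫ b1 = b ≫ h) : f ≫ a1 ≫ b1 = (a ≫ b) ≫ h := by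
  rw [reassoc_of% e1, e2, Category.assoc]

lemma ev0_nat_right (J : Ideal R) {Y Y' : ModuleCat.{u} R} (f : Y ⟶ Y') :
    ((Ext R (ModuleCat.{u} R) 0).obj (Opposite.op (ModuleCat.of R (R ⧸ J)))).map f ≫ ev0 J Y' =
      ev0 J Y ≫ f := by
  have := ext0_nat_right f (ModuleCat.of R (R ⧸ J))
  have h2 : ((linearYoneda R (ModuleCat.{u} R)).map f).app
      (Opposite.op (ModuleCat.of R (R ⧸ J))) ≫ ev1 J Y' = ev1 J Y ≫ f := rfl
  exact nat_aux4 this h2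

lemma ev0_nat_left {J J' : Ideal R} (f : ModuleCat.of R (R ⧸ J) ⟶ ModuleCat.of R (R ⧸ J'))
    (hf : f.hom (Ideal.Quotient.mk J 1) = Ideal.Quotient.mk J' 1) (Y : ModuleCat.{u} R) :
    ((Ext R (ModuleCat.{u} R) 0).map f.op).app Y ≫ ev0 J Y = ev0 J' Y := by
  have := ext0_nat_left f Y
  have h2 : ((linearYoneda R (ModuleCat.{u} R)).obj Y).map f.op ≫ ev1 J Y = ev1 J' Y ≫ 𝟙 Y := by
    ext (g : ModuleCat.of R (R ⧸ J') ⟶ Y)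
    change g.hom (f.hom (Ideal.Quotient.mk J 1)) = g.hom (Ideal.Quotient.mk J' 1)
    rw [hf]
  exact (nat_aux4 this h2).trans (Category.comp_id _)

variable (𝔞 : Ideal R)

/-- the diagram for a fixed module -/
noncomputable abbrev DD (i : ℕ) (M : ModuleCat.{u} R) : ℕᵒᵖᵒᵖ ⥤ ModuleCat.{u} R :=
  (localCohomology.ringModIdeals (localCohomology.idealPowersDiagram 𝔞)).op ⋙
    (Ext R (ModuleCat.{u} R) i).flip.obj M

noncomputable def lcCocone (i : ℕ) (M : ModuleCat.{u} R) : Cocone (DD 𝔞 i M) :=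
  haveI := localCohomology.hasColimitDiagram.{u, 0} (localCohomology.idealPowersDiagram 𝔞) i
  ((evaluation _ _).obj M).mapCocone
    (colimit.cocone (localCohomology.diagram (localCohomology.idealPowersDiagram 𝔞) i))

lemma lcCocone_pt (i : ℕ) (M : ModuleCat.{u} R) :
    (lcCocone 𝔞 i M).pt = (localCohomology 𝔞 i).obj M := rfl

noncomputable def lcIsColimit (i : ℕ) (M : ModuleCat.{u} R) : IsColimit (lcCocone 𝔞 i M) :=
  haveI := localCohomology.hasColimitDiagram.{u, 0} (localCohomology.idealPowersDiagram 𝔞) i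
  isColimitOfPreserves ((evaluation (ModuleCat.{u} R) (ModuleCat.{u} R)).obj M) (colimit.isColimit
    (localCohomology.diagram (localCohomology.idealPowersDiagram 𝔞) i))

noncomputable def phi : localCohomology 𝔞 0 ⟶ 𝟭 (ModuleCat.{u} R) :=
  haveI := localCohomology.hasColimitDiagram.{u, 0} (localCohomology.idealPowersDiagram 𝔞) 0
  colimit.desc (localCohomology.diagram (localCohomology.idealPowersDiagram 𝔞) 0)
    { pt := 𝟭 (ModuleCat.{u} R)
      ι :=
        { app := fun t =>
            { app := fun Y => ev0 (𝔞 ^ t.unop.unop) Y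
              naturality := fun Y Y' f => ev0_nat_right _ f }
          naturality := fun t t' f => by
            ext1
            funext Y
            exact (ev0_nat_left ((localCohomology.ringModIdeals
              (localCohomology.idealPowersDiagram 𝔞)).map f.unop) rfl Y).trans
              (Category.comp_id _).symm } }

lemma phi_ι (M : ModuleCat.{u} R) (t : ℕᵒᵖᵒᵖ) :
    (lcCocone 𝔞 0 M).ι.app t ≫ (phi 𝔞).app M = ev0 (𝔞 ^ t.unop.unop) M := by
  have := localCohomology.hasColimitDiagram.{u, 0} (localCohomology.idealPowersDiagram 𝔞) 0
  exact congr_arg (fun z => NatTrans.app z M) (colimit.ι_desc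
    (F := localCohomology.diagram (localCohomology.idealPowersDiagram 𝔞) 0) _ t)

instance pres_forget : PreservesColimitsOfShape ℕᵒᵖᵒᵖ (forget (ModuleCat.{u} R)) :=
  have : PreservesFilteredColimitsOfSize.{0, 0} (forget (ModuleCat.{u} R)) :=
    preservesFilteredColimitsOfSize_shrink.{0, u, 0, u} _
  inferInstance

lemma phi_injective (M : ModuleCat.{u} R) : Function.Injective ((phi 𝔞).app M) := by
  rw [injective_iff_map_eq_zero]
  intro x hx
  obtain ⟨t, y, rfl⟩ := Concrete.isColimit_exists_rep _ (lcIsColimit 𝔞 0 M) x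
  have h : ev0 (𝔞 ^ t.unop.unop) M y = 0 := by
    rw [← phi_ι]; exact hx
  have : y = 0 := ev0_injective _ _ (h.trans (map_zero _).symm)
  rw [this]
  exact map_zero _

lemma phi_range (M : ModuleCat.{u} R) (m : M) :
    (∃ x, (phi 𝔞).app M x = m) ↔ ∃ t : ℕ, ∀ r ∈ 𝔞 ^ t, r • m = 0 := by
  constructor
  · rintro ⟨x, rfl⟩
    obtain ⟨t, y, rfl⟩ := Concrete.isColimit_exists_rep _ (lcIsColimit 𝔞 0 M) x
    refine ⟨t.unop.unop, fun r hr => ?_⟩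
    have := ev0_smul (𝔞 ^ t.unop.unop) M y r hr
    rw [← phi_ι] at this
    exact this
  · rintro ⟨t, ht⟩
    obtain ⟨y, hy⟩ := ev0_surj _ M m ht
    refine ⟨(lcCocone 𝔞 0 M).ι.app (.op (.op t)) y, ?_⟩
    rw [← hy, ← phi_ι _ _ (.op (.op t))]
    rfl
end LC

section Tors
open CategoryTheory Limits
variable {R} (𝔞 : Ideal R)

lemma fg_torsion {M : Type u} [AddCommGroup M] [Module R M] (N : Submodule R M) (hN : N.FG)
    (h : ∀ m ∈ N, ∃ t : ℕ, ∀ r ∈ 𝔞 ^ t, r • m = 0) :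
    ∃ t : ℕ, ∀ m ∈ N, ∀ r ∈ 𝔞 ^ t, r • m = 0 := by
  obtain ⟨F, rfl⟩ := hN
  choose! t ht using h
  refine ⟨F.sup t, fun m hm => ?_⟩
  induction hm using Submodule.span_induction with
  | mem x hx =>
    intro r hr
    exact ht x (Submodule.subset_span hx) r (Ideal.pow_le_pow_right (Finset.le_sup hx) hr)
  | zero => intro r _; simp
  | add x y _ _ hx hy => intro r hr; rw [smul_add, hx r hr, hy r hr, add_zero]
  | smul a x _ hx => intro r hr; rw [smul_comm, hx r hr, smul_zero]

variable [IsNoetherianRing R]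

lemma lc0_injective (I : ModuleCat.{u} R) [Injective I] :
    Injective ((localCohomology 𝔞 0).obj I) := by
  rw [← Module.injective_iff_injective_object]
  have hI : Module.Injective R I := by
    rw [Module.injective_iff_injective_object]; infer_instance
  apply Module.Baer.injective
  intro 𝔟 g
  let φ : (localCohomology 𝔞 0).obj I →ₗ[R] I := ((phi 𝔞).app I).hom
  have hφ : Function.Injective φ := phi_injective 𝔞 I
  let f : 𝔟 →ₗ[R] I := φ ∘ₗ g
  obtain ⟨t, ht⟩ := fg_torsion 𝔞 (LinearMap.range f)
    ((Submodule.fg_top _).1 (Module.Finite.fg_top)) (by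
      rintro _ ⟨b, rfl⟩
      exact (phi_range 𝔞 I _).1 ⟨g b, rfl⟩)
  obtain ⟨k, hk⟩ := Ideal.exists_pow_inf_eq_pow_smul 𝔞 (M := R) 𝔟
  have hk' := hk (k + t) (by omega)
  let n := k + t
  let p : 𝔟 →ₗ[R] R ⧸ (𝔞 ^ n) := (Submodule.mkQ (𝔞 ^ n)) ∘ₗ 𝔟.subtype
  have hker : LinearMap.ker p ≤ LinearMap.ker f := by
    rintro ⟨b, hb⟩ hbp
    have hbn : b ∈ 𝔞 ^ n := by
      have : Submodule.Quotient.mk (p := 𝔞 ^ n) b = 0 := hbp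
      rwa [Submodule.Quotient.mk_eq_zero] at this
    have hb2 : b ∈ (𝔞 ^ t) • 𝔟 := by
      have : b ∈ 𝔞 ^ (k + t) • (⊤ : Submodule R R) ⊓ 𝔟 := ⟨by simpa using hbn, hb⟩
      rw [hk', Nat.add_sub_cancel_left] at this
      exact Submodule.smul_mono le_rfl inf_le_right this
    have key : ∀ x (hx : x ∈ (𝔞 ^ t) • 𝔟), ∃ hx' : x ∈ 𝔟, f ⟨x, hx'⟩ = 0 := by
      intro x hx
      induction hx using Submodule.smul_induction_on' with
      | smul r hr y hy =>
        refine ⟨𝔟.smul_mem r hy, ?_⟩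
        have : f ⟨r • y, 𝔟.smul_mem r hy⟩ = r • f ⟨y, hy⟩ := by rw [← map_smul]; rfl
        rw [this]
        exact ht _ ⟨_, rfl⟩ r hr
      | add x hx y hy h1 h2 =>
        obtain ⟨h1, e1⟩ := h1
        obtain ⟨h2, e2⟩ := h2
        refine ⟨𝔟.add_mem h1 h2, ?_⟩
        have : f ⟨x + y, 𝔟.add_mem h1 h2⟩ = f ⟨x, h1⟩ + f ⟨y, h2⟩ := by rw [← map_add]; rfl
        rw [this, e1, e2, add_zero]
    exact (key b hb2).2
  obtain ⟨h, hh⟩ := hI.out ((LinearMap.ker p).liftQ p le_rfl)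
    (by rw [← LinearMap.ker_eq_bot]; exact Submodule.ker_liftQ_eq_bot _ _ _ le_rfl)
    ((LinearMap.ker p).liftQ f hker)
  have hh' : ∀ b : 𝔟, h (Submodule.Quotient.mk (b : R)) = f b := fun b =>
    hh (Submodule.Quotient.mk b)
  have hsm : ∀ r : R, h (Submodule.Quotient.mk r) = r • h (Submodule.Quotient.mk 1) := by
    intro r
    rw [← map_smul, ← Submodule.Quotient.mk_smul, smul_eq_mul, mul_one]
  obtain ⟨x, hx⟩ := (phi_range 𝔞 I (h (Submodule.Quotient.mk 1))).2 ⟨n, fun r hr => by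
    rw [← hsm, (Submodule.Quotient.mk_eq_zero _).2 hr, map_zero]⟩
  refine ⟨LinearMap.toSpanSingleton R _ x, fun b hb => ?_⟩
  apply hφ
  have e : φ (g ⟨b, hb⟩) = f ⟨b, hb⟩ := rfl
  rw [e, ← hh' ⟨b, hb⟩, hsm, LinearMap.toSpanSingleton_apply, map_smul]
  congr 1

lemma ext0_coker_zero (M : ModuleCat.{u} R) :
    IsZero (extModule R 0 (ModuleCat.of R (R ⧸ 𝔞))
      (ModuleCat.of R (M ⧸ LinearMap.range ((phi 𝔞).app M).hom))) := by
  suffices hs : Subsingleton (extModule R 0 (ModuleCat.of R (R ⧸ 𝔞))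
      (ModuleCat.of R (M ⧸ LinearMap.range ((phi 𝔞).app M).hom))) from
    ModuleCat.isZero_of_subsingleton _
  refine subsingleton_of_forall_eq 0 (fun x => ?_)
  apply ev0_injective 𝔞 (ModuleCat.of R (M ⧸ LinearMap.range ((phi 𝔞).app M).hom))
  refine Eq.trans ?_ (map_zero _).symm
  have h := ev0_smul 𝔞 (ModuleCat.of R (M ⧸ LinearMap.range ((phi 𝔞).app M).hom)) x
  obtain ⟨c, hc⟩ := Submodule.Quotient.mk_surjective _
    (ev0 𝔞 (ModuleCat.of R (M ⧸ LinearMap.range ((phi 𝔞).app M).hom)) x)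
  rw [← hc] at h ⊢
  refine (Submodule.Quotient.mk_eq_zero _).2 ?_
  have hac : ∀ m ∈ Submodule.map (LinearMap.toSpanSingleton R M c) 𝔞,
      ∃ t : ℕ, ∀ r ∈ 𝔞 ^ t, r • m = 0 := by
    rintro _ ⟨r, hr, rfl⟩
    apply (phi_range 𝔞 M _).1
    have := h r hr
    exact (Submodule.Quotient.mk_eq_zero _).1 this
  obtain ⟨t, ht⟩ := fg_torsion 𝔞 _ (Submodule.FG.map _ ((isNoetherianRing_iff_ideal_fg R).1 inferInstance 𝔞)) hac
  apply (phi_range 𝔞 M c).2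
  refine ⟨t + 1, fun r hr => ?_⟩
  rw [pow_succ] at hr
  induction hr using Submodule.mul_induction_on' with
  | mem_mul_mem a ha b hb =>
    rw [mul_smul]
    exact ht _ ⟨b, hb, rfl⟩ a ha
  | add x _ y _ h1 h2 => rw [add_smul, h1, h2, add_zero]
end Tors

section Main
open CategoryTheory Limits
variable {R} (𝔞 : Ideal R)

lemma Ex.exact {X Y Z : ModuleCat.{u} R} {f : X ⟶ Y} {g : Y ⟶ Z} (h : Ex f g) :
    Function.Exact f g := by
  obtain ⟨w, h⟩ := h
  exact (ShortComplex.ShortExact.moduleCat_exact_iff_function_exact _).1 h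

lemma ses_mk {X Y Z : ModuleCat.{u} R} (f : X ⟶ Y) (g : Y ⟶ Z) (hf : Function.Injective f)
    (hg : Function.Surjective g) (h : Function.Exact f g) :
    ∃ w : f ≫ g = 0, (ShortComplex.mk f g w).ShortExact := by
  have w : f ≫ g = 0 := by
    ext x
    exact h.apply_apply_eq_zero x
  refine ⟨w, ShortComplex.ShortExact.mk' ?_ ((ModuleCat.mono_iff_injective _).2 hf)
    ((ModuleCat.epi_iff_surjective _).2 hg)⟩
  exact (ShortComplex.ShortExact.moduleCat_exact_iff_function_exact _).2 h

lemma SerreClass.of_Ex (S : SerreClass R) {X Y Z : ModuleCat.{u} R} {f : X ⟶ Y} {g : Y ⟶ Z}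
    (h : Ex f g) (hX : S.P X) (hZ : S.P Z) : S.P Y := by
  have hfg := h.exact
  obtain ⟨w, hs⟩ := ses_mk (ModuleCat.ofHom (LinearMap.range f.hom).subtype)
    (ModuleCat.ofHom g.hom.rangeRestrict) (Submodule.subtype_injective _)
    (LinearMap.surjective_rangeRestrict _) (by
      intro y
      constructor
      · intro hy
        have : g y = 0 := congr_arg Subtype.val hy
        obtain ⟨x, hx⟩ := (hfg y).1 this
        exact ⟨⟨y, x, hx⟩, rfl⟩
      · rintro ⟨⟨y, x, rfl⟩, rfl⟩
        exact Subtype.ext (hfg.apply_apply_eq_zero x))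
  refine S.mem_of_extension _ hs ?_ ?_
  · exact S.mem_of_epi (ModuleCat.ofHom f.hom.rangeRestrict)
      ((ModuleCat.epi_iff_surjective _).2 (LinearMap.surjective_rangeRestrict _)) hX
  · exact S.mem_of_mono (ModuleCat.ofHom (LinearMap.range g.hom).subtype)
      ((ModuleCat.mono_iff_injective _).2 (Submodule.subtype_injective _)) hZ

lemma SerreClass.of_isZero (S : SerreClass R) {X Y : ModuleCat.{u} R} (hX : IsZero X)
    (hY : S.P Y) : S.P X :=
  S.mem_of_mono (0 : X ⟶ Y) ⟨fun _ _ _ => hX.eq_of_tgt _ _⟩ hY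

section
variable (S : SerreClass R) (N : ModuleCat.{u} R) (T : ShortComplex (ModuleCat.{u} R))
  (hT : T.ShortExact) (j : ℕ)
include hT

lemma ext_mid (h1 : S.P (extModule R j N T.X₁)) (h3 : S.P (extModule R j N T.X₃)) :
    S.P (extModule R j N T.X₂) := by
  obtain ⟨δ, hδ⟩ := Ext_les T hT j
  exact S.of_Ex (hδ (Opposite.op N)).1 h1 h3

lemma ext_right (h2 : S.P (extModule R j N T.X₂)) (h1 : S.P (extModule R (j+1) N T.X₁)) :
    S.P (extModule R j N T.X₃) := by
  obtain ⟨δ, hδ⟩ := Ext_les T hT j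
  exact S.of_Ex (hδ (Opposite.op N)).2.1 h2 h1

lemma ext_left (h3 : S.P (extModule R j N T.X₃)) (h2 : S.P (extModule R (j+1) N T.X₂)) :
    S.P (extModule R (j+1) N T.X₁) := by
  obtain ⟨δ, hδ⟩ := Ext_les T hT j
  exact S.of_Ex (hδ (Opposite.op N)).2.2 h3 h2

lemma lc_shift [Injective T.X₂] (n : ℕ) :
    Nonempty ((localCohomology 𝔞 (n+1)).obj T.X₃ ≅ (localCohomology 𝔞 (n+2)).obj T.X₁) := by
  obtain ⟨δ, hδ⟩ := Ext_les T hT (n+1)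
  have hiso : ∀ X, IsIso (δ.app X) := by
    intro X
    have z1 := Ext_injective_zero X.unop T.X₂ n
    have z2 := Ext_injective_zero X.unop T.X₂ (n+1)
    have : Mono (δ.app X) := (hδ X).2.1.2.mono_g (z1.eq_of_src _ _)
    have : Epi (δ.app X) := (hδ X).2.2.2.epi_f (z2.eq_of_tgt _ _)
    exact isIso_of_mono_of_epi _
  have : IsIso δ := NatIso.isIso_of_isIso_app δ
  exact ⟨(lcIsColimit 𝔞 (n+1) T.X₃).coconePointsIsoOfNatIso (lcIsColimit 𝔞 (n+2) T.X₁)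
    (Functor.isoWhiskerLeft _ (asIso δ))⟩

lemma lc_one [Injective T.X₂] :
    ∃ d : (localCohomology 𝔞 0).obj T.X₃ ⟶ (localCohomology 𝔞 1).obj T.X₁,
      Function.Surjective d ∧ Function.Exact ((localCohomology 𝔞 0).map T.g) d := by
  obtain ⟨δ, hδ⟩ := Ext_les T hT 0
  let δ' : DD 𝔞 0 T.X₃ ⟶ DD 𝔞 1 T.X₁ := Functor.whiskerLeft _ δ
  let d : (localCohomology 𝔞 0).obj T.X₃ ⟶ (localCohomology 𝔞 1).obj T.X₁ :=
    (lcIsColimit 𝔞 0 T.X₃).map (lcCocone 𝔞 1 T.X₁) δ'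
  have hd : ∀ t (y : (DD 𝔞 0 T.X₃).obj t), d ((lcCocone 𝔞 0 T.X₃).ι.app t y) =
      (lcCocone 𝔞 1 T.X₁).ι.app t (δ'.app t y) := by
    intro t y
    have := (lcIsColimit 𝔞 0 T.X₃).ι_map (lcCocone 𝔞 1 T.X₁) δ' t
    exact congr_arg (fun z => (ModuleCat.Hom.hom z) y) this
  let G : DD 𝔞 0 T.X₂ ⟶ DD 𝔞 0 T.X₃ :=
    Functor.whiskerLeft _ ((Ext R (ModuleCat.{u} R) 0).flip.map T.g)
  have hG : ∀ t (y : (DD 𝔞 0 T.X₂).obj t),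
      (localCohomology 𝔞 0).map T.g ((lcCocone 𝔞 0 T.X₂).ι.app t y) =
      (lcCocone 𝔞 0 T.X₃).ι.app t (G.app t y) := by
    intro t y
    have := localCohomology.hasColimitDiagram.{u, 0} (localCohomology.idealPowersDiagram 𝔞) 0
    have := (colimit.ι (localCohomology.diagram (localCohomology.idealPowersDiagram 𝔞) 0)
      t).naturality T.g
    exact (congr_arg (fun z => (ModuleCat.Hom.hom z) y) this).symm
  have hex : ∀ t, Function.Exact (G.app t) (δ'.app t) := fun t => (hδ _).2.1.exact
  refine ⟨d, ?_, ?_⟩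
  · intro x
    obtain ⟨t, y, rfl⟩ := Concrete.isColimit_exists_rep _ (lcIsColimit 𝔞 1 T.X₁) x
    have z2 := Ext_injective_zero ((localCohomology.ringModIdeals
      (localCohomology.idealPowersDiagram 𝔞)).op.obj t).unop T.X₂ 0
    have he : Epi (δ'.app t) := (hδ _).2.2.2.epi_f (z2.eq_of_tgt _ _)
    obtain ⟨w, hw⟩ := (ModuleCat.epi_iff_surjective _).1 he y
    exact ⟨_, (hd t w).trans (by rw [hw])⟩
  · intro x
    constructor
    · intro hx
      obtain ⟨t, y, rfl⟩ := Concrete.isColimit_exists_rep _ (lcIsColimit 𝔞 0 T.X₃) x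
      have h0 : (lcCocone 𝔞 1 T.X₁).ι.app t (δ'.app t y) = (lcCocone 𝔞 1 T.X₁).ι.app t 0 :=
        ((hd t y).symm.trans hx).trans (map_zero _).symm
      obtain ⟨k, f, g, hfg⟩ := (Concrete.isColimit_rep_eq_iff_exists _ (lcIsColimit 𝔞 1 T.X₁)
        _ _).1 h0
      have h1 : δ'.app k ((DD 𝔞 0 T.X₃).map f y) = 0 := by
        have := congr_arg (fun z => (ModuleCat.Hom.hom z) y) (δ'.naturality f)
        exact this.trans (hfg.trans (map_zero _))
      obtain ⟨v, hv⟩ := (hex k _).1 h1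
      refine ⟨(lcCocone 𝔞 0 T.X₂).ι.app k v, ?_⟩
      refine (hG k v).trans ?_
      rw [hv]
      exact congr_arg (fun z => (ModuleCat.Hom.hom z) y) ((lcCocone 𝔞 0 T.X₃).w f)
    · rintro ⟨x, rfl⟩
      obtain ⟨t, y, rfl⟩ := Concrete.isColimit_exists_rep _ (lcIsColimit 𝔞 0 T.X₂) x
      refine (congr_arg d (hG t y)).trans ((hd t _).trans ?_)
      rw [(hex t).apply_apply_eq_zero]
      exact map_zero _
end

variable [IsNoetherianRing R]

lemma main_ind (S : SerreClass R) (s : ℕ) : ∀ (C : ModuleCat.{u} R) (G : ℕ → ModuleCat.{u} R)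
    (B : ModuleCat.{u} R) (b : B ⟶ (localCohomology 𝔞 0).obj C)
    (q : (localCohomology 𝔞 0).obj C ⟶ G 0) (w : b ≫ q = 0)
    (_ : (ShortComplex.mk b q w).ShortExact)
    (_ : ∀ i, Nonempty (G (i+1) ≅ (localCohomology 𝔞 (i+1)).obj C))
    (_ : ∀ j, S.P (extModule R (j+1) (ModuleCat.of R (R ⧸ 𝔞)) B))
    (_ : S.P (extModule R (s + 1) (ModuleCat.of R (R ⧸ 𝔞)) C))
    (_ : ∀ i < s, ∀ j : ℕ, S.P (extModule R j (ModuleCat.of R (R ⧸ 𝔞)) (G i))),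
    S.P (extModule R 1 (ModuleCat.of R (R ⧸ 𝔞)) (G s)) := by
  induction s with
  | zero =>
    intro C G B b q w hw hG hB h1 h2
    refine ext_right S _ _ hw 1 ?_ (hB 1)
    obtain ⟨w', hs⟩ := ses_mk ((phi 𝔞).app C)
      (ModuleCat.ofHom (LinearMap.range ((phi 𝔞).app C).hom).mkQ) (phi_injective 𝔞 C)
      (Submodule.mkQ_surjective _) (LinearMap.exact_map_mkQ_range _)
    exact ext_left S _ _ hs 0 (S.of_isZero (ext0_coker_zero 𝔞 C) h1) h1
  | succ s ih =>
    intro C G B b q w hw hG hB h1 h2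
    have hΓ : ∀ j, S.P (extModule R (j+1) (ModuleCat.of R (R ⧸ 𝔞))
        ((localCohomology 𝔞 0).obj C)) := fun j =>
      ext_mid S _ _ hw (j+1) (hB j) (h2 0 (by omega) _)
    let I := Injective.under C
    let ι : C ⟶ I := Injective.ι C
    have hι : Function.Injective ι := (ModuleCat.mono_iff_injective _).1 inferInstance
    obtain ⟨w', hs⟩ := ses_mk ι (ModuleCat.ofHom (LinearMap.range ι.hom).mkQ) hι
      (Submodule.mkQ_surjective _) (LinearMap.exact_map_mkQ_range _)
    let T := ShortComplex.mk _ _ w'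
    have hTI : Injective T.X₂ := inferInstanceAs (Injective (Injective.under C))
    have zP : ∀ {X : ModuleCat.{u} R}, IsZero X → S.P X := fun hX => S.of_isZero hX h1
    obtain ⟨d, hd, hde⟩ := lc_one 𝔞 T hs
    let g0 := (localCohomology 𝔞 0).map T.g
    obtain ⟨w2, hs2⟩ := ses_mk ((localCohomology 𝔞 0).map T.f)
      (ModuleCat.ofHom g0.hom.rangeRestrict)
      (by
        intro x y hxy
        apply phi_injective 𝔞 C
        apply hι
        have e : ∀ z, ι ((phi 𝔞).app C z) = (phi 𝔞).app I ((localCohomology 𝔞 0).map T.f z) :=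
          fun z => (congr_arg (fun t => (ModuleCat.Hom.hom t) z) ((phi 𝔞).naturality T.f)).symm
        rw [e, e, hxy])
      (LinearMap.surjective_rangeRestrict _)
      (by
        have e : ∀ z, ι ((phi 𝔞).app C z) = (phi 𝔞).app I ((localCohomology 𝔞 0).map T.f z) :=
          fun z => (congr_arg (fun t => (ModuleCat.Hom.hom t) z) ((phi 𝔞).naturality T.f)).symm
        have e2 : ∀ z, T.g ((phi 𝔞).app I z) = (phi 𝔞).app T.X₃ (g0 z) :=
          fun z => (congr_arg (fun t => (ModuleCat.Hom.hom t) z) ((phi 𝔞).naturality T.g)).symm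
        intro x
        constructor
        · intro hx
          have hx0 : g0 x = 0 := congr_arg Subtype.val hx
          have h3 : T.g ((phi 𝔞).app I x) = 0 := by rw [e2, hx0]; exact map_zero _
          obtain ⟨c, hc⟩ := (LinearMap.exact_map_mkQ_range ι.hom _).1 h3
          obtain ⟨t, ht⟩ := (phi_range 𝔞 I _).1 ⟨x, rfl⟩
          obtain ⟨z, hz⟩ := (phi_range 𝔞 C c).2 ⟨t, fun r hr => by
            apply hι
            have : ι (r • c) = r • ι c := map_smul ι.hom r c
            rw [this]
            refine Eq.trans ?_ (map_zero ι.hom).symm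
            have hc' : ι c = (phi 𝔞).app I x := hc
            rw [hc']
            exact ht r hr⟩
          refine ⟨z, phi_injective 𝔞 I ?_⟩
          rw [← hc]
          refine (e z).symm.trans ?_
          rw [hz]
        · rintro ⟨z, rfl⟩
          apply Subtype.ext
          apply phi_injective 𝔞 T.X₃
          refine (e2 _).symm.trans ?_
          refine Eq.trans ?_ (map_zero _).symm
          refine (congr_arg T.g (e z).symm).trans ?_
          exact (LinearMap.exact_map_mkQ_range ι.hom).apply_apply_eq_zero _)
    have hB' : ∀ j, S.P (extModule R (j+1) (ModuleCat.of R (R ⧸ 𝔞))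
        (ModuleCat.of R (LinearMap.range g0.hom))) := fun j => by
      have := lc0_injective 𝔞 I
      exact ext_right S _ _ hs2 (j+1) (zP (Ext_injective_zero _ _ j)) (hΓ (j+1))
    obtain ⟨e1⟩ := hG 0
    obtain ⟨w3, hs3⟩ := ses_mk (ModuleCat.ofHom (LinearMap.range g0.hom).subtype) (d ≫ e1.inv)
      (Submodule.subtype_injective _)
      (by
        have : Function.Surjective e1.inv := (ModuleCat.epi_iff_surjective _).1 inferInstance
        exact this.comp hd)
      (by
        have hi : Function.Injective e1.inv := (ModuleCat.mono_iff_injective _).1 inferInstance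
        intro x
        constructor
        · intro hx
          have : d x = 0 := hi (hx.trans (map_zero _).symm)
          obtain ⟨y, hy⟩ := (hde x).1 this
          exact ⟨⟨x, y, hy⟩, rfl⟩
        · rintro ⟨⟨_, y, rfl⟩, rfl⟩
          have : d (g0 y) = 0 := hde.apply_apply_eq_zero y
          exact (congr_arg e1.inv this).trans (map_zero _))
    refine ih T.X₃ (fun i => G (i+1)) _ _ _ w3 hs3 ?_ hB' ?_ ?_
    · intro i
      obtain ⟨a⟩ := hG (i+1)
      obtain ⟨c⟩ := lc_shift 𝔞 T hs i
      exact ⟨a ≪≫ c.symm⟩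
    · exact ext_right S _ _ hs (s+1) (zP (Ext_injective_zero _ _ s)) h1
    · intro i hi j
      exact h2 (i+1) (by omega) j
end Main

theorem stmt4 [IsNoetherianRing R] (𝔞 : Ideal R) (S : SerreClass R) (s : ℕ)
    (M : ModuleCat.{u} R)
    (h1 : S.P (extModule R (s + 1) (ModuleCat.of R (R ⧸ 𝔞)) M))
    (h2 : ∀ i < s, ∀ j : ℕ,
      S.P (extModule R j (ModuleCat.of R (R ⧸ 𝔞)) ((localCohomology 𝔞 i).obj M))) :
    S.P (extModule R 1 (ModuleCat.of R (R ⧸ 𝔞)) ((localCohomology 𝔞 s).obj M)) := by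
  have hz : Limits.IsZero (ModuleCat.of R PUnit.{u+1}) := ModuleCat.isZero_of_subsingleton _
  obtain ⟨w, hs⟩ := ses_mk (0 : ModuleCat.of R PUnit.{u+1} ⟶ (localCohomology 𝔞 0).obj M)
    (𝟙 ((localCohomology 𝔞 0).obj M)) (fun _ _ _ => rfl) (fun x => ⟨x, rfl⟩)
    (fun x => ⟨fun hx => ⟨0, Eq.symm hx⟩, by rintro ⟨y, rfl⟩; rfl⟩)
  refine main_ind 𝔞 S s M (fun i => (localCohomology 𝔞 i).obj M) _ _ _ w hs
    (fun i => ⟨Iso.refl _⟩) (fun j => ?_) h1 h2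
  have : Injective (ModuleCat.of R PUnit.{u+1}) := ⟨fun g f _ => ⟨0, hz.eq_of_tgt _ _⟩⟩
  exact S.of_isZero (Ext_injective_zero _ _ j) h1
end

section
/- Let R be a Noetherian ring, 𝔞 an ideal of R, and M a non-zero R-module with dim Supp(M) ≤ 1 and Supp(M) ⊆ V(𝔞). Then M is 𝔞-cofinite if and only if Hom_R(R/𝔞, M) and Ext^1_R(R/𝔞, M) are both finitely generated R-modules. -/
open CategoryTheory

universe u

variable (R : Type u) [CommRing R]

section Bridge
open CochainComplex HomComplex

lemma extMk_zero_eq_zero {R : Type u} [CommRing R] {X Y : ModuleCat.{u} R}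
    (P : ProjectiveResolution X)
    (f : P.complex.X 0 ⟶ Y) (hf : P.complex.d 1 0 ≫ f = 0)
    (h : P.extMk f 1 rfl hf = 0) : f = 0 := by
  simp only [← P.extEquivCohomologyClass.apply_eq_iff_eq,
    ProjectiveResolution.extEquivCohomologyClass_extMk,
    ProjectiveResolution.extEquivCohomologyClass_zero,
    CohomologyClass.mk_eq_zero_iff] at h
  rw [Cocycle.toSingleMk_mem_coboundaries_iff _ _ _ _ _ 1 (by simp)] at h
  obtain ⟨g, hg⟩ := h
  have : g = 0 := (CochainComplex.isZero_of_isStrictlyLE P.cochainComplex 0 1 (by simp)).eq_of_src _ _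
  rw [this, Limits.comp_zero] at hg
  rw [← cancel_epi (P.cochainComplexXIso (-(0 : ℕ)) 0 rfl).hom, ← hg, Limits.comp_zero]

lemma finite_iff_of_surj {R Z A B : Type*} [CommRing R] [AddCommGroup Z] [AddCommGroup A]
    [AddCommGroup B] [Module R Z] [Module R A] [Module R B] (f : Z →ₗ[R] A) (g : Z →ₗ[R] B)
    (hf : Function.Surjective f) (hg : Function.Surjective g)
    (h : ∀ z, f z = 0 ↔ g z = 0) : Module.Finite R A ↔ Module.Finite R B := by
  have hk : LinearMap.ker f = LinearMap.ker g := by ext z; exact h z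
  exact Module.Finite.equiv_iff
    ((f.quotKerEquivOfSurjective hf).symm.trans
      ((Submodule.quotEquivOfEq _ _ hk).trans (g.quotKerEquivOfSurjective hg)))

/-- cocycles to Ext -/
noncomputable def cocyclesToExt {R : Type u} [CommRing R] {X : ModuleCat.{u} R}
    (P : ProjectiveResolution X) (Y : ModuleCat.{u} R) (n : ℕ) :
    (LinearMap.ker (Linear.leftComp R Y (P.complex.d (n+1) n))) →ₗ[R] Abelian.Ext X Y n where
  toFun f := P.extMk f.1 (n+1) rfl (LinearMap.mem_ker.1 f.2)
  map_add' f g := (P.add_extMk ..).symm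
  map_smul' r f := by
    rw [Abelian.Ext.smul_eq_comp_mk₀, RingHom.id_apply]
    refine Eq.trans ?_ (P.extMk_comp_mk₀ _ _ _ _ _).symm
    congr 1

lemma finite_extModule_iff_aux {R : Type u} [CommRing R] {N : ModuleCat.{u} R}
    (P : ProjectiveResolution N) (M : ModuleCat.{u} R) (p i : ℕ)
    (hp : (ComplexShape.up ℕ).prev i = p)
    (H : ∀ z : LinearMap.ker (Linear.leftComp R M (P.complex.d (i+1) i)),
      cocyclesToExt P M i z = 0 ↔ ∃ y, (P.complex.linearYonedaObj R M).d p i y = z.1) :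
    Module.Finite R (extModule R i N M) ↔ Module.Finite R (Abelian.Ext N M i) := by
  let K := P.complex.linearYonedaObj R M
  let S := K.sc' p i (i+1)
  let e : extModule R i N M ≅ S.moduleCatLeftHomologyData.H :=
    (P.isoExt i M).trans ((K.homologyIsoSc' p i (i+1) hp (by simp)).trans S.moduleCatHomologyIso)
  rw [Module.Finite.equiv_iff e.toLinearEquiv]
  let f : LinearMap.ker S.g.hom →ₗ[R] (LinearMap.ker S.g.hom ⧸ LinearMap.range S.moduleCatToCycles)
    := Submodule.mkQ _
  let ι : LinearMap.ker S.g.hom →ₗ[R]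
      LinearMap.ker (Linear.leftComp R M (P.complex.d (i+1) i)) :=
    { toFun := fun z => ⟨z.1, z.2⟩
      map_add' := fun _ _ => rfl
      map_smul' := fun _ _ => rfl }
  refine finite_iff_of_surj f ((cocyclesToExt P M i).comp ι)
    (Submodule.mkQ_surjective _) ?_ ?_
  · refine Function.Surjective.comp ?_ (fun z => ⟨⟨z.1, z.2⟩, rfl⟩)
    intro a
    obtain ⟨g, hg, rfl⟩ := P.extMk_surjective a (i+1) rfl
    exact ⟨⟨g, hg⟩, rfl⟩
  · intro z
    refine (Submodule.Quotient.mk_eq_zero _).trans ?_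
    refine Iff.trans ?_ (H _).symm
    constructor
    · rintro ⟨y, rfl⟩
      exact ⟨y, rfl⟩
    · rintro ⟨y, hy⟩
      exact ⟨y, Subtype.ext hy⟩

lemma finite_extModule_iff (i : ℕ) (N M : ModuleCat.{u} R) :
    Module.Finite R (extModule R i N M) ↔ Module.Finite R (Abelian.Ext N M i) := by
  let P := projectiveResolution N
  cases i with
  | zero =>
    refine finite_extModule_iff_aux P M 0 0 (by simp) fun z => ?_
    have h0 := HomologicalComplex.shape (P.complex.linearYonedaObj R M) 0 0 (by simp)
    constructor
    · intro h
      exact ⟨0, (map_zero _).trans (extMk_zero_eq_zero P z.1 (LinearMap.mem_ker.1 z.2) h).symm⟩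
    · rintro ⟨y, hy⟩
      have h1 : ((P.complex.linearYonedaObj R M).d 0 0) y = 0 := by rw [h0]; rfl
      have : z = 0 := Subtype.ext (hy.symm.trans h1)
      rw [this, map_zero]
  | succ n =>
    refine finite_extModule_iff_aux P M n (n+1) (by simp) fun z => ?_
    exact P.extMk_eq_zero_iff z.1 (n+1+1) rfl (LinearMap.mem_ker.1 z.2) n rfl
end Bridge

set_option linter.unusedSectionVars false

section ExtFin
variable {R}

lemma finite_mid {R A B C : Type*} [CommRing R] [IsNoetherianRing R] [AddCommGroup A]
    [AddCommGroup B] [AddCommGroup C] [Module R A] [Module R B] [Module R C]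
    (f : A →ₗ[R] B) (g : B →ₗ[R] C) (h : ∀ b, g b = 0 → ∃ a, f a = b)
    (hA : Module.Finite R A) (hC : Module.Finite R C) : Module.Finite R B := by
  have h1 : LinearMap.ker g ≤ LinearMap.range f := fun b hb => h b hb
  have hr : (LinearMap.range f).FG := Module.Finite.iff_fg.1 inferInstance
  have : Module.Finite R (LinearMap.range f) := inferInstance
  have hk : Module.Finite R (LinearMap.ker g) :=
    Module.Finite.of_injective _ (Submodule.inclusion_injective h1)
  have hq : Module.Finite R (B ⧸ LinearMap.ker g) :=
    Module.Finite.equiv g.quotKerEquivRange.symm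
  exact Module.Finite.of_submodule_quotient (LinearMap.ker g)

/-- `Ext^i(R/a, M)` is finitely generated. -/
def EF (a : Ideal R) (i : ℕ) (M : Type u) [AddCommGroup M] [Module R M] : Prop :=
  Module.Finite R (Abelian.Ext (ModuleCat.of R (R ⧸ a)) (ModuleCat.of R M) i)

variable [IsNoetherianRing R] {a : Ideal R} {N M Q : Type u} [AddCommGroup M] [Module R M]
  [AddCommGroup N] [Module R N] [AddCommGroup Q] [Module R Q]

lemma ef_of_finite (i : ℕ) [Module.Finite R M] : EF a i M :=
  ModuleCat.finite_ext R (ModuleCat.of R (R ⧸ a)) (ModuleCat.of R M) i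

lemma ef_zero_iff_hom : EF a 0 M ↔ Module.Finite R ((R ⧸ a) →ₗ[R] M) :=
  Module.Finite.equiv_iff (Abelian.Ext.linearEquiv₀.trans ModuleCat.homLinearEquiv)

/-- annihilated submodule -/
def tors (a : Ideal R) (M : Type*) [AddCommGroup M] [Module R M] : Submodule R M where
  carrier := {m | ∀ r ∈ a, r • m = 0}
  add_mem' h1 h2 r hr := by rw [smul_add, h1 r hr, h2 r hr, add_zero]
  zero_mem' r _ := smul_zero r
  smul_mem' c m h r hr := by rw [smul_comm, h r hr, smul_zero]

lemma ef_zero_iff : EF a 0 M ↔ Module.Finite R (tors a M) := by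
  rw [ef_zero_iff_hom]
  have e : ((R ⧸ a) →ₗ[R] M) ≃ₗ[R] tors a M :=
    { toFun := fun f => ⟨f 1, fun r hr => by
        rw [← map_smul, ← map_zero f]
        congr 1
        change Ideal.Quotient.mk a (r * 1) = 0
        rw [mul_one]
        exact Ideal.Quotient.eq_zero_iff_mem.2 hr⟩
      map_add' := fun _ _ => rfl
      map_smul' := fun _ _ => rfl
      invFun := fun m => Submodule.liftQ a (LinearMap.toSpanSingleton R M m.1) (fun r hr => by
        simpa using m.2 r hr)
      left_inv := fun f => by
        ext
        simp
      right_inv := fun m => by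
        ext
        exact (Submodule.liftQ_apply a (LinearMap.toSpanSingleton R M m.1) (1 : R)).trans
          (one_smul R m.1) }
  exact Module.Finite.equiv_iff e

section SES

lemma ses_aux (f : N →ₗ[R] M) (g : M →ₗ[R] Q) (hf : Function.Injective f)
    (hg : Function.Surjective g) (hfg : Function.Exact f g) : ∃ S : ShortComplex (ModuleCat.{u} R), S.ShortExact ∧
    S = ShortComplex.mk (ModuleCat.ofHom f) (ModuleCat.ofHom g)
      (by ext x; exact hfg.apply_apply_eq_zero x) := by
  refine ⟨_, ?_, rfl⟩
  have : Mono (ModuleCat.ofHom f) := (ModuleCat.mono_iff_injective _).2 hf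
  have : Epi (ModuleCat.ofHom g) := (ModuleCat.epi_iff_surjective _).2 hg
  refine { exact := ?_ }
  rw [ShortComplex.moduleCat_exact_iff]
  exact fun x hx => (hfg x).1 hx

lemma ef_mid (f : N →ₗ[R] M) (g : M →ₗ[R] Q) (hf : Function.Injective f)
    (hg : Function.Surjective g) (hfg : Function.Exact f g)
    (i : ℕ) (hN : EF a i N) (hQ : EF a i Q) : EF a i M := by
  obtain ⟨S, hS, rfl⟩ := ses_aux f g hf hg hfg
  exact finite_mid ((Abelian.Ext.mk₀ (ModuleCat.ofHom f)).postcompOfLinear R _ (add_zero i))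
    ((Abelian.Ext.mk₀ (ModuleCat.ofHom g)).postcompOfLinear R _ (add_zero i))
    (fun b hb => Abelian.Ext.covariant_sequence_exact₂ _ hS b hb) hN hQ

lemma ef_left (f : N →ₗ[R] M) (g : M →ₗ[R] Q) (hf : Function.Injective f)
    (hg : Function.Surjective g) (hfg : Function.Exact f g)
    (i : ℕ) (hQ : EF a i Q) (hM : EF a (i+1) M) : EF a (i+1) N := by
  obtain ⟨S, hS, rfl⟩ := ses_aux f g hf hg hfg
  exact finite_mid (hS.extClass.postcompOfLinear R _ rfl)
    ((Abelian.Ext.mk₀ (ModuleCat.ofHom f)).postcompOfLinear R _ (add_zero (i+1)))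
    (fun b hb => Abelian.Ext.covariant_sequence_exact₁ _ hS b hb rfl) hQ hM

lemma ef_right (f : N →ₗ[R] M) (g : M →ₗ[R] Q) (hf : Function.Injective f)
    (hg : Function.Surjective g) (hfg : Function.Exact f g)
    (i : ℕ) (hM : EF a i M) (hN : EF a (i+1) N) : EF a i Q := by
  obtain ⟨S, hS, rfl⟩ := ses_aux f g hf hg hfg
  exact finite_mid ((Abelian.Ext.mk₀ (ModuleCat.ofHom g)).postcompOfLinear R _ (add_zero i))
    (hS.extClass.postcompOfLinear R _ rfl)
    (fun b hb => Abelian.Ext.covariant_sequence_exact₃ _ hS b rfl hb) hM hN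

end SES

lemma ef_zero_of_injective (f : N →ₗ[R] M) (hf : Function.Injective f) (h : EF a 0 M) :
    EF a 0 N := by
  rw [ef_zero_iff] at h ⊢
  exact Module.Finite.of_injective
    ((f.comp (tors a N).subtype).codRestrict (tors a M) (fun m r hr => by
      simp [← map_smul, m.2 r hr]))
    (fun x y h => Subtype.ext (hf (congrArg Subtype.val h)))

lemma ext_smul_zero {x : R} (hx : x ∈ a) {Y : ModuleCat.{u} R} (i : ℕ)
    (b : Abelian.Ext (ModuleCat.of R (R ⧸ a)) Y i) : x • b = 0 := by
  have h : x • 𝟙 (ModuleCat.of R (R ⧸ a)) = 0 := by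
    ext
    change Ideal.Quotient.mk a (x * 1) = 0
    rw [mul_one]
    exact Ideal.Quotient.eq_zero_iff_mem.2 hx
  have smul_eq : x • b = (Abelian.Ext.mk₀ (x • 𝟙 (ModuleCat.of R (R ⧸ a)))).comp b (zero_add i) := by
    simp [Abelian.Ext.mk₀_smul]
  rw [smul_eq, h]; simp

/-- abstract x-lemma: `N = ker x`, `I = x M`, `Q = M / x M`. -/
lemma ef_of_x {x : R} (hx : x ∈ a) (i : ℕ)
    (hN : EF a i (LinearMap.ker (LinearMap.lsmul R M x)))
    (hQ : ∀ j, j + 1 = i → EF a j (M ⧸ LinearMap.range (LinearMap.lsmul R M x))) : EF a i M := by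
  let I := LinearMap.range (LinearMap.lsmul R M x)
  let p : M →ₗ[R] I := (LinearMap.lsmul R M x).rangeRestrict
  let ι : I →ₗ[R] M := I.subtype
  -- the kernel of Ext(I) → Ext(M)
  let F := (Abelian.Ext.mk₀ (ModuleCat.ofHom ι)).postcompOfLinear R
    (ModuleCat.of R (R ⧸ a)) (add_zero i)
  let G := (Abelian.Ext.mk₀ (ModuleCat.ofHom p)).postcompOfLinear R
    (ModuleCat.of R (R ⧸ a)) (add_zero i)
  have hFG : ∀ b, F (G b) = 0 := by
    intro b
    have h1 : F (G b) = b.comp (Abelian.Ext.mk₀ (ModuleCat.ofHom p ≫ ModuleCat.ofHom ι))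
        (add_zero i) := by
      simp [F, G]
    have h2 : ModuleCat.ofHom p ≫ ModuleCat.ofHom ι = x • 𝟙 (ModuleCat.of R M) := by
      ext m
      rfl
    rw [h1, h2, ← Abelian.Ext.smul_eq_comp_mk₀]
    exact ext_smul_zero hx i b
  have hF : Module.Finite R (LinearMap.ker F) := by
    obtain ⟨S, hS, rfl⟩ := ses_aux ι I.mkQ I.subtype_injective I.mkQ_surjective
      (LinearMap.exact_subtype_mkQ I)
    cases i with
    | zero =>
      have : LinearMap.ker F = ⊥ := LinearMap.ker_eq_bot.2
        (@Abelian.Ext.postcomp_mk₀_injective_of_mono _ _ _ _ (ModuleCat.of R (R ⧸ a)) _ _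
          (ModuleCat.ofHom ι) ((ModuleCat.mono_iff_injective _).2 I.subtype_injective))
      rw [this]; infer_instance
    | succ j =>
      have := hQ j rfl
      let D := hS.extClass.postcompOfLinear R (ModuleCat.of R (R ⧸ a)) (rfl : j + 1 = j + 1)
      have hle : LinearMap.ker F ≤ LinearMap.range D := fun b hb =>
        Abelian.Ext.covariant_sequence_exact₁ _ hS b hb rfl
      unfold EF at this
      have : Module.Finite R (LinearMap.range D) := inferInstance
      exact Module.Finite.of_injective _ (Submodule.inclusion_injective hle)
  obtain ⟨S, hS, rfl⟩ := ses_aux (LinearMap.ker (LinearMap.lsmul R M x)).subtype p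
    (Submodule.subtype_injective _) (LinearMap.surjective_rangeRestrict _)
    (by
      intro m
      simp [p, ← Subtype.coe_inj])
  refine finite_mid ((Abelian.Ext.mk₀ (ModuleCat.ofHom
      (LinearMap.ker (LinearMap.lsmul R M x)).subtype)).postcompOfLinear R _ (add_zero i))
    (G.codRestrict (LinearMap.ker F) hFG)
    (fun b hb => Abelian.Ext.covariant_sequence_exact₂ _ hS b (congrArg Subtype.val hb)) hN hF
end ExtFin

section CommAlg

lemma artinian_of_support {A : Type u} [CommRing A] [IsNoetherianRing A] {H : Type u}
    [AddCommGroup H] [Module A H] (hfin : Module.Finite A H)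
    (hs : ∀ p ∈ Module.support A H, p.asIdeal.IsMaximal) : IsArtinian A H := by
  induction hfin using IsNoetherianRing.induction_on_isQuotientEquivQuotientPrime A with
  | subsingleton N => infer_instance
  | quotient N p f =>
    have hp : p.asIdeal.IsMaximal := by
      apply hs
      rw [f.support_eq, Module.mem_support_iff_of_finite, Ideal.annihilator_quotient]
    have : IsSimpleModule A (A ⧸ p.asIdeal) := isSimpleModule_iff_isCoatom.2 hp.1
    have : IsArtinian A (A ⧸ p.asIdeal) := inferInstance
    exact f.symm.isArtinian_iff.1 this
  | exact N₁ N₂ N₃ f g hf hg hfg h₁ h₃ =>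
    have i1 := h₁ (fun p hp => hs p (Module.support_subset_of_injective f hf hp))
    have i3 := h₃ (fun p hp => hs p (Module.support_subset_of_surjective g hg hp))
    exact isArtinian_of_range_eq_ker f g (LinearMap.exact_iff.1 hfg).symm

lemma artinian_one {A M : Type*} [CommRing A] [AddCommGroup M] [Module A M] (x : A)
    (ht : ∀ m : M, ∃ n, x ^ n • m = 0) (hK : IsArtinian A (LinearMap.ker (LinearMap.lsmul A M x))) :
    IsArtinian A M := by
  rw [← monotone_stabilizes_iff_artinian]
  intro F
  let K := LinearMap.ker (LinearMap.lsmul A M x)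
  let g : Submodule A M → ℕ → Submodule A K := fun N k =>
    (N.map (LinearMap.lsmul A M (x ^ k))).comap K.subtype
  have gmono : ∀ {N N' : Submodule A M} {k k' : ℕ}, N ≤ N' → k' ≤ k → g N k ≤ g N' k' := by
    intro N N' k k' hN hk y hy
    obtain ⟨n, hn, hny⟩ := hy
    refine ⟨x ^ (k - k') • n, N'.smul_mem _ (hN hn), ?_⟩
    rw [← hny]
    simp only [LinearMap.lsmul_apply, smul_smul, ← pow_add]
    congr 2; omega
  let F' : ℕ → Submodule A M := fun j => OrderDual.ofDual (F j)
  have hF : ∀ {i j : ℕ}, i ≤ j → F' j ≤ F' i := fun h => F.monotone h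
  have key : ∀ N N' : Submodule A M, N ≤ N' → (∀ k, g N' k ≤ g N k) → N' ≤ N := by
    intro N N' hle hk
    have : ∀ k, ∀ m ∈ N', x ^ k • m = 0 → m ∈ N := by
      intro k
      induction k with
      | zero => intro m _ h; simp at h; rw [h]; exact N.zero_mem
      | succ k ih =>
        intro m hm h
        have hmem : (⟨x ^ k • m, by
          simp only [LinearMap.mem_ker, LinearMap.lsmul_apply, smul_smul, ← pow_succ', K]
          exact h⟩ : K) ∈ g N' k := ⟨m, hm, rfl⟩
        obtain ⟨n, hn, hnm⟩ := hk k hmem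
        have h2 : m - n ∈ N := ih _ (N'.sub_mem hm (hle hn)) (by
          rw [smul_sub, sub_eq_zero]; exact hnm.symm)
        simpa using N.add_mem h2 hn
    intro m hm
    obtain ⟨n, hn⟩ := ht m
    exact this n m hm hn
  let D : ℕ →o (Submodule A K)ᵒᵈ := ⟨fun j => OrderDual.toDual (g (F' j) j), fun i j h => gmono (hF h) h⟩
  obtain ⟨n0, hn0⟩ := IsArtinian.monotone_stabilizes D
  have hcol : ∀ k, ∃ n, ∀ m, n ≤ m → g (F' n) k = g (F' m) k := by
    intro k
    let D : ℕ →o (Submodule A K)ᵒᵈ :=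
      ⟨fun j => OrderDual.toDual (g (F' j) k), fun i j h => gmono (hF h) le_rfl⟩
    exact IsArtinian.monotone_stabilizes D
  choose c hc using hcol
  let J := n0 + ∑ k ∈ Finset.range n0, c k
  refine ⟨J, fun m hm => ?_⟩
  change F' J = F' m
  apply le_antisymm _ (hF hm)
  apply key _ _ (hF hm)
  intro k
  by_cases hk : k < n0
  · have h1 : c k ≤ J := le_trans (Finset.single_le_sum (f := c) (fun _ _ => Nat.zero_le _)
      (Finset.mem_range.2 hk)) (Nat.le_add_left _ _)
    rw [← hc k J h1, ← hc k m (h1.trans hm)]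
  · push Not at hk
    have hJ : n0 ≤ J := Nat.le_add_right _ _
    calc g (F' J) k ≤ g (F' n0) n0 := gmono (hF hJ) hk
      _ = g (F' (max m k)) (max m k) := hn0 (max m k) (hk.trans (le_max_right _ _))
      _ ≤ g (F' m) k := gmono (hF (le_max_left _ _)) (le_max_right _ _)

lemma artinian_of_tors_finset {A : Type u} [CommRing A] (s : Finset A) :
    ∀ (M : Type u) [AddCommGroup M] [Module A M], (∀ x ∈ s, ∀ m : M, ∃ n, x ^ n • m = 0) →
    IsArtinian A (tors (Ideal.span (s : Set A)) M) → IsArtinian A M := by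
  classical
  induction s using Finset.induction_on with
  | empty =>
    intro M _ _ _ h
    have : tors (Ideal.span ((∅ : Finset A) : Set A)) M = ⊤ := by
      rw [eq_top_iff]
      intro m _ r hr
      simp at hr
      simp [hr]
    rw [this] at h
    exact Submodule.topEquiv.isArtinian_iff.1 h
  | insert x s hx ih =>
    intro M _ _ hM h
    apply artinian_one x (hM x (by simp))
    apply ih
    · intro y hy m
      obtain ⟨n, hn⟩ := hM y (by simp [hy]) m.1
      exact ⟨n, Subtype.ext hn⟩
    · let f : tors (Ideal.span (s : Set A)) (LinearMap.ker (LinearMap.lsmul A M x)) →ₗ[A]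
          tors (Ideal.span ((insert x s : Finset A) : Set A)) M :=
        ((Submodule.subtype _).comp (Submodule.subtype _)).codRestrict _ (by
          intro m r hr
          rw [Finset.coe_insert, Ideal.mem_span_insert] at hr
          obtain ⟨c, z, hz, rfl⟩ := hr
          have h1 := congrArg Subtype.val (m.2 z hz)
          have h2 : x • (m.1.1) = 0 := m.1.2
          simp only [LinearMap.comp_apply, Submodule.subtype_apply, add_smul, mul_smul, h2]
          simpa using h1)
      refine isArtinian_of_injective f (fun a b hab => ?_)
      have h3 : (f a).1 = (f b).1 := by rw [hab]
      exact Subtype.ext (Subtype.ext h3)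

lemma artinian_of_tors {A : Type u} [CommRing A] [IsNoetherianRing A] (a : Ideal A) (M : Type u)
    [AddCommGroup M] [Module A M] (hM : ∀ m : M, ∃ n, ∀ r ∈ a ^ n, r • m = 0)
    (h : IsArtinian A (tors a M)) : IsArtinian A M := by
  obtain ⟨s, rfl⟩ := (inferInstance : IsNoetherian A A).noetherian a
  apply artinian_of_tors_finset s M _ h
  intro x hx m
  obtain ⟨n, hn⟩ := hM m
  exact ⟨n, hn _ (Ideal.pow_mem_pow (Ideal.subset_span hx) n)⟩

lemma tors_anti {A : Type u} [CommRing A] {a b : Ideal A} (h : a ≤ b) (M : Type u)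
    [AddCommGroup M] [Module A M] : tors b M ≤ tors a M := fun _ hm r hr => hm r (h hr)

lemma tors_pow_finite {A : Type u} [CommRing A] [IsNoetherianRing A] (a : Ideal A) (M : Type u)
    [AddCommGroup M] [Module A M] (h : Module.Finite A (tors a M)) (k : ℕ) :
    Module.Finite A (tors (a ^ k) M) := by
  induction k with
  | zero =>
    have : tors (a ^ 0) M = ⊥ := by
      rw [eq_bot_iff]
      intro m hm
      simpa using hm 1 (by simp)
    rw [this]; infer_instance
  | succ k ih =>
    obtain ⟨s, hs⟩ := (inferInstance : IsNoetherian A A).noetherian a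
    let g : tors (a ^ (k+1)) M →ₗ[A] (s → tors (a ^ k) M) :=
      LinearMap.pi fun x => ((LinearMap.lsmul A M x.1).comp (Submodule.subtype _)).codRestrict _ (by
        intro m r hr
        simp only [LinearMap.comp_apply, Submodule.subtype_apply, LinearMap.lsmul_apply, smul_smul]
        refine m.2 _ ?_
        rw [pow_succ]
        exact Ideal.mul_mem_mul hr (hs ▸ Ideal.subset_span x.2))
    refine finite_mid (Submodule.inclusion (tors_anti (Ideal.pow_le_self (Nat.succ_ne_zero k)) M)) g
      ?_ h inferInstance
    intro b hb
    refine ⟨⟨b.1, ?_⟩, rfl⟩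
    intro r hr
    have : a ≤ (LinearMap.ker (LinearMap.toSpanSingleton A M b.1)) := by
      refine hs.symm.le.trans (Submodule.span_le.2 fun x hx => ?_)
      have h3 : x • b.1 = 0 := congrArg Subtype.val (congrFun hb ⟨x, hx⟩)
      simpa using h3
    exact this hr

lemma supIrred_dichotomy {A M : Type*} [CommRing A] [AddCommGroup M] [Module A M] [IsArtinian A M]
    {N : Submodule A M} (hN : SupIrred N) (x : A) :
    x ∈ (Module.annihilator A N).radical ∨ N.map (LinearMap.lsmul A M x) = N := by
  let f : Module.End A N := LinearMap.lsmul A N x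
  obtain ⟨n, hn, hn1⟩ := (f.eventually_codisjoint_ker_pow_range_pow.and
    (Filter.eventually_ge_atTop 1)).exists
  have hf : ∀ (k : ℕ) (z : N), (f ^ k) z = x ^ k • z := by
    intro k z
    induction k with
    | zero => simp
    | succ k ih => rw [pow_succ', Module.End.mul_apply, ih, pow_succ', mul_smul]; rfl
  have h1 : (LinearMap.ker (f ^ n)).map N.subtype ⊔ (LinearMap.range (f ^ n)).map N.subtype = N := by
    rw [← Submodule.map_sup, hn.eq_top, Submodule.map_top, Submodule.range_subtype]
  rcases hN.2 h1 with h | h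
  · left
    refine ⟨n, ?_⟩
    rw [Module.mem_annihilator]
    intro z
    have hz : z.1 ∈ (LinearMap.ker (f ^ n)).map N.subtype := by rw [h]; exact z.2
    obtain ⟨w, hw, hwz⟩ := hz
    have : w = z := Subtype.ext hwz
    rw [← this, ← hf]; exact hw
  · right
    apply le_antisymm
    · rintro _ ⟨z, hz, rfl⟩
      exact N.smul_mem x hz
    · intro z hz
      rw [← h] at hz
      obtain ⟨_, ⟨w, rfl⟩, rfl⟩ := hz
      refine ⟨x ^ (n - 1) • w.1, N.smul_mem _ w.2, ?_⟩
      rw [hf]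
      simp only [LinearMap.lsmul_apply, smul_smul, ← pow_succ']
      rw [Nat.sub_add_cancel hn1]; rfl

lemma supIrred_prime {A M : Type*} [CommRing A] [AddCommGroup M] [Module A M] [IsArtinian A M]
    {N : Submodule A M} (hN : SupIrred N) : (Module.annihilator A N).radical.IsPrime := by
  have hb := hN.ne_bot
  have hsurj : ∀ x, N.map (LinearMap.lsmul A M x) = N → x ∉ (Module.annihilator A N).radical := by
    rintro x hx ⟨n, hn⟩
    apply hb
    have : ∀ k, N.map (LinearMap.lsmul A M (x ^ k)) = N := by
      intro k
      induction k with
      | zero =>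
        have : LinearMap.lsmul A M (x ^ 0) = LinearMap.id := by ext; simp
        rw [this, Submodule.map_id]
      | succ k ih =>
        have : LinearMap.lsmul A M (x ^ (k+1)) =
          (LinearMap.lsmul A M x).comp (LinearMap.lsmul A M (x ^ k)) := by
          ext; simp only [LinearMap.comp_apply, LinearMap.lsmul_apply, pow_succ', mul_smul]
        rw [this, Submodule.map_comp, ih, hx]
    rw [eq_bot_iff, ← this n]
    rintro _ ⟨z, hz, rfl⟩
    exact congrArg Subtype.val (Module.mem_annihilator.1 hn ⟨z, hz⟩)
  refine ⟨?_, ?_⟩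
  · intro h
    refine hsurj 1 ?_ (h ▸ Submodule.mem_top)
    have : LinearMap.lsmul A M 1 = LinearMap.id := by ext; simp
    rw [this, Submodule.map_id]
  · intro x y hxy
    by_contra! hcon
    have hx := (supIrred_dichotomy hN x).resolve_left hcon.1
    have hy := (supIrred_dichotomy hN y).resolve_left hcon.2
    refine hsurj (x * y) ?_ hxy
    have : LinearMap.lsmul A M (x * y) = (LinearMap.lsmul A M x).comp (LinearMap.lsmul A M y) := by
      ext; simp only [LinearMap.comp_apply, LinearMap.lsmul_apply, mul_smul]
    rw [this, Submodule.map_comp, hy, hx]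

lemma exists_generic {A : Type u} [CommRing A] [IsNoetherianRing A] (a : Ideal A) (M : Type u)
    [AddCommGroup M] [Module A M] [IsArtinian A M] (h : Module.Finite A (tors a M)) :
    ∃ P : Finset (Ideal A), (∀ p ∈ P, p.IsPrime ∧ ¬ a ≤ p) ∧
      ∀ x, (∀ p ∈ P, x ∉ p) →
        ∃ L : Submodule A M, L.FG ∧ LinearMap.range (LinearMap.lsmul A M x) ⊔ L = ⊤ := by
  classical
  obtain ⟨s, hs, hirr⟩ := exists_supIrred_decomposition (⊤ : Submodule A M)
  refine ⟨(s.image fun N => (Module.annihilator A N).radical).filter (fun p => ¬ a ≤ p), ?_, ?_⟩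
  · intro p hp
    rw [Finset.mem_filter, Finset.mem_image] at hp
    obtain ⟨⟨N, hN, rfl⟩, hp⟩ := hp
    exact ⟨supIrred_prime (hirr hN), hp⟩
  intro x hx
  suffices H : ∀ t ⊆ s, ∃ L : Submodule A M, L.FG ∧
      t.sup id ≤ LinearMap.range (LinearMap.lsmul A M x) ⊔ L by
    obtain ⟨L, hL, hle⟩ := H s subset_rfl
    exact ⟨L, hL, top_le_iff.1 (hs ▸ hle)⟩
  intro t
  induction t using Finset.induction_on with
  | empty => exact fun _ => ⟨⊥, Submodule.fg_bot, by simp⟩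
  | insert N t hNt ih =>
    intro hts
    obtain ⟨L, hL, hle⟩ := ih ((Finset.subset_insert _ _).trans hts)
    have hN : N ∈ s := hts (Finset.mem_insert_self _ _)
    have : ∃ L' : Submodule A M, L'.FG ∧ N ≤ LinearMap.range (LinearMap.lsmul A M x) ⊔ L' := by
      by_cases hap : a ≤ (Module.annihilator A N).radical
      · obtain ⟨k, hk⟩ := Ideal.exists_pow_le_of_le_radical_of_fg hap (IsNoetherian.noetherian a)
        refine ⟨tors (a ^ k) M, Module.Finite.iff_fg.1 (tors_pow_finite a M h k), ?_⟩
        refine le_sup_of_le_right fun z hz r hr => ?_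
        exact congrArg Subtype.val (Module.mem_annihilator.1 (hk hr) ⟨z, hz⟩)
      · have hxN := hx _ (Finset.mem_filter.2 ⟨Finset.mem_image_of_mem _ hN, hap⟩)
        refine ⟨⊥, Submodule.fg_bot, ?_⟩
        rw [sup_bot_eq, ← (supIrred_dichotomy (hirr hN) x).resolve_left hxN]
        exact LinearMap.map_le_range
    obtain ⟨L', hL', hle'⟩ := this
    refine ⟨L' ⊔ L, hL'.sup hL, ?_⟩
    rw [Finset.sup_insert]
    refine sup_le (hle'.trans (sup_le_sup_left le_sup_left _)) (hle.trans (sup_le_sup_left le_sup_right _))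

end CommAlg

section MainPart
variable {R} [IsNoetherianRing R]

lemma tors_of_supp (a : Ideal R) (M : Type u) [AddCommGroup M] [Module R M]
    (h : Module.support R M ⊆ PrimeSpectrum.zeroLocus (a : Set R)) (m : M) :
    ∃ n, ∀ r ∈ a ^ n, r • m = 0 := by
  have h1 : a ≤ (Submodule.span R {m}).annihilator.radical := by
    rw [Ideal.radical_eq_sInf]
    refine le_sInf ?_
    rintro p ⟨hp, hpp⟩
    have : (⟨p, hpp⟩ : PrimeSpectrum R) ∈ Module.support R M :=
      Module.mem_support_iff_exists_annihilator.2 ⟨m, hp⟩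
    exact h this
  obtain ⟨n, hn⟩ := Ideal.exists_pow_le_of_le_radical_of_fg h1 (IsNoetherian.noetherian a)
  exact ⟨n, fun r hr => (Submodule.mem_annihilator_span_singleton _ _).1 (hn hr)⟩

lemma ann_le_of_supp (a : Ideal R) (M : Type u) [AddCommGroup M] [Module R M]
    (h : Module.support R M ⊆ PrimeSpectrum.zeroLocus (a : Set R)) (q : PrimeSpectrum R)
    (hq : q ∈ Module.support R M) : Module.annihilator R (tors a M) ≤ q.asIdeal := by
  obtain ⟨m, hm⟩ := Module.mem_support_iff_exists_annihilator.1 hq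
  obtain ⟨p, hp, hpq⟩ := Ideal.exists_minimalPrimes_le hm
  have hass := Module.associatedPrimes.minimalPrimes_annihilator_subset_associatedPrimes R
    (Submodule.span R {m}) hp
  obtain ⟨hpp, x, hx⟩ := isAssociatedPrime_iff.1 hass
  have hmem : (⟨p, hpp⟩ : PrimeSpectrum R) ∈ Module.support R M :=
    Module.mem_support_iff_exists_annihilator.2 ⟨m, hp.1.2⟩
  have hap : a ≤ p := h hmem
  have key : ∀ r, r ∈ p ↔ r • x = 0 := by
    intro r
    rw [hx, Submodule.mem_colon_singleton, Submodule.mem_bot]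
  have hxt : x.1 ∈ tors a M := fun r hr => congrArg Subtype.val ((key r).1 (hap hr))
  refine le_trans (fun r hr => (key r).2 ?_) hpq
  have h4 : r • x.1 = 0 := congrArg Subtype.val (Module.mem_annihilator.1 hr ⟨x.1, hxt⟩)
  exact Subtype.ext h4

lemma common_denom {M : Type*} [AddCommGroup M] [Module R M] (J : Ideal R) (S : Submonoid R)
    (m : M) (h : ∀ y ∈ J, ∃ s ∈ S, s • y • m = 0) : ∃ s ∈ S, ∀ y ∈ J, s • y • m = 0 := by
  classical
  obtain ⟨t, ht⟩ := (inferInstance : IsNoetherian R R).noetherian J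
  have h' : ∀ y : t, ∃ s ∈ S, s • y.1 • m = 0 := fun y => h _ (ht ▸ Submodule.subset_span y.2)
  choose c hc hc0 using h'
  refine ⟨∏ y, c y, S.prod_mem fun y _ => hc y, ?_⟩
  have : J ≤ LinearMap.ker (LinearMap.toSpanSingleton R M ((∏ y, c y) • m)) := by
    rw [← ht]
    refine Submodule.span_le.2 fun y hy => ?_
    have h1 := hc0 ⟨y, hy⟩
    change y • (∏ y, c y) • m = 0
    rw [← Finset.prod_erase_mul _ _ (Finset.mem_univ (⟨y, hy⟩ : t)), smul_comm, mul_smul, h1,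
      smul_zero]
  intro y hy
  rw [smul_comm]
  exact this hy

lemma exists_generic_loc (a : Ideal R) (M : Type u) [AddCommGroup M] [Module R M]
    (hM : ∀ m : M, ∃ n, ∀ r ∈ a ^ n, r • m = 0) (h : Module.Finite R (tors a M))
    (S : Submonoid R)
    (hS : ∀ p q : Ideal R, p.IsPrime → q.IsPrime → Module.annihilator R (tors a M) ≤ p →
      (∀ s ∈ S, s ∉ q) → p ≤ q → p = q) :
    ∃ P : Finset (Ideal R), (∀ p ∈ P, p.IsPrime ∧ ¬ a ≤ p) ∧
      ∀ x, (∀ p ∈ P, x ∉ p) →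
        ∃ L : Submodule R M, L.FG ∧
          ∀ m, ∃ s ∈ S, s • m ∈ LinearMap.range (LinearMap.lsmul R M x) ⊔ L := by
  classical
  let A := Localization S
  let M' := LocalizedModule S M
  let f : M →ₗ[R] M' := LocalizedModule.mkLinearMap S M
  let a' : Ideal A := a.map (algebraMap R A)
  have : IsNoetherianRing A := IsLocalization.isNoetherianRing S A inferInstance
  have hle : tors a' M' ≤ (tors a M).localized' A S f := by
    intro z hz
    obtain ⟨⟨m, s⟩, rfl⟩ := IsLocalizedModule.mk'_surjective S f z
    rw [Function.uncurry_apply_pair] at hz ⊢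
    have h1 : ∀ y ∈ a, ∃ t ∈ S, t • y • m = 0 := by
      intro y hy
      have h2 := hz (algebraMap R A y) (Ideal.mem_map_of_mem _ hy)
      rw [algebraMap_smul, ← IsLocalizedModule.mk'_smul, IsLocalizedModule.mk'_eq_zero'] at h2
      obtain ⟨t, ht⟩ := h2
      exact ⟨t, t.2, ht⟩
    obtain ⟨t, ht, htm⟩ := common_denom a S m h1
    rw [Submodule.mem_localized']
    refine ⟨t • m, fun r hr => by rw [smul_comm]; exact htm r hr, ⟨t, ht⟩ * s, ?_⟩
    exact IsLocalizedModule.mk'_cancel_left (f := f) m ⟨t, ht⟩ s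
  have hfgl : ((tors a M).localized' A S f).FG :=
    Submodule.localized'_fg (N := tors a M) A S f (Module.Finite.iff_fg.1 h)
  have hfin : Module.Finite A (tors a' M') := by
    have := Module.Finite.iff_fg.2 hfgl
    exact Module.Finite.of_injective _ (Submodule.inclusion_injective hle)
  have hann : ∀ r ∈ Module.annihilator R (tors a M),
      algebraMap R A r ∈ Module.annihilator A (tors a' M') := by
    intro r hr
    rw [Module.mem_annihilator]
    intro z
    obtain ⟨m, hm, s, hz⟩ := (Submodule.mem_localized' A S f _ _).1 (hle z.2)
    apply Subtype.ext
    change algebraMap R A r • z.1 = 0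
    have h3 : r • m = 0 := congrArg Subtype.val (Module.mem_annihilator.1 hr ⟨m, hm⟩)
    rw [← hz, algebraMap_smul, ← IsLocalizedModule.mk'_smul, h3, IsLocalizedModule.mk'_zero]
  have hdisj : ∀ p : Ideal A, p.IsPrime → ∀ s ∈ S, s ∉ p.comap (algebraMap R A) := by
    intro p hp s hs hsp
    exact hp.ne_top (Ideal.eq_top_of_isUnit_mem _ hsp (IsLocalization.map_units A ⟨s, hs⟩))
  have hart : IsArtinian A (tors a' M') := by
    apply artinian_of_support hfin
    intro p hp
    rw [Module.mem_support_iff_of_finite] at hp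
    obtain ⟨J, hJ, hpJ⟩ := Ideal.exists_le_maximal p.asIdeal p.2.ne_top
    have hJp : J.IsPrime := hJ.isPrime
    have := hS (p.asIdeal.comap (algebraMap R A)) (J.comap (algebraMap R A)) inferInstance
      inferInstance (fun r hr => hp (hann r hr)) (hdisj J hJp) (Ideal.comap_mono hpJ)
    have e : p.asIdeal = J := by
      rw [← IsLocalization.map_under S A p.asIdeal, ← IsLocalization.map_under S A J]
      exact congrArg _ this
    rw [e]; exact hJ
  have htors : ∀ z : M', ∃ n, ∀ r ∈ a' ^ n, r • z = 0 := by
    intro z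
    obtain ⟨⟨m, s⟩, rfl⟩ := IsLocalizedModule.mk'_surjective S f z
    obtain ⟨n, hn⟩ := hM m
    refine ⟨n, ?_⟩
    have : a' ^ n ≤ LinearMap.ker (LinearMap.toSpanSingleton A M'
        (IsLocalizedModule.mk' f m s)) := by
      rw [← Ideal.map_pow, Ideal.map_le_iff_le_comap]
      intro r hr
      change algebraMap R A r • IsLocalizedModule.mk' f m s = 0
      rw [algebraMap_smul, ← IsLocalizedModule.mk'_smul, hn r hr, IsLocalizedModule.mk'_zero]
    exact fun r hr => this hr
  have : IsArtinian A M' := artinian_of_tors a' M' htors hart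
  obtain ⟨P', hP', hgen⟩ := exists_generic a' M' hfin
  refine ⟨P'.image (Ideal.comap (algebraMap R A)), ?_, ?_⟩
  · intro p hp
    obtain ⟨p', hp', rfl⟩ := Finset.mem_image.1 hp
    have := (hP' p' hp').1
    exact ⟨inferInstance, fun hle => (hP' p' hp').2 (Ideal.map_le_iff_le_comap.2 hle)⟩
  intro x hx
  obtain ⟨L', ⟨t, rfl⟩, hL'⟩ := hgen (algebraMap R A x) (fun p' hp' hxp =>
    hx _ (Finset.mem_image_of_mem _ hp') hxp)
  have hsurj : ∀ z : M', ∃ m : M, ∃ s : S, IsLocalizedModule.mk' f m s = z := fun z => by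
    obtain ⟨⟨m, s⟩, rfl⟩ := IsLocalizedModule.mk'_surjective S f z
    exact ⟨m, s, rfl⟩
  choose num den hnd using hsurj
  refine ⟨Submodule.span R (t.image num), ⟨t.image num, rfl⟩, ?_⟩
  set W := LinearMap.range (LinearMap.lsmul R M x) ⊔ Submodule.span R (t.image num : Set M) with hW
  have htop : W.localized' A S f = ⊤ := by
    rw [eq_top_iff, ← hL']
    refine sup_le ?_ (Submodule.span_le.2 ?_)
    · rintro _ ⟨z, rfl⟩
      rw [← hnd z, LinearMap.lsmul_apply, algebraMap_smul, ← IsLocalizedModule.mk'_smul]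
      exact (Submodule.mem_localized' A S f _ _).2
        ⟨x • num z, Submodule.mem_sup_left ⟨num z, rfl⟩, den z, rfl⟩
    · intro z hz
      refine (Submodule.mem_localized' A S f _ _).2 ⟨num z, Submodule.mem_sup_right
        (Submodule.subset_span (Finset.mem_coe.2 (Finset.mem_image_of_mem _ hz))), den z, hnd z⟩
  intro m
  have hm : f m ∈ W.localized' A S f := by rw [htop]; trivial
  obtain ⟨w, hw, s, hws⟩ := (Submodule.mem_localized' A S f _ _).1 hm
  have h5 : f w = f ((s : R) • m) := by
    rw [map_smul, ← hws]
    exact (IsLocalizedModule.mk'_cancel' f w s).symm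
  obtain ⟨c, hc⟩ := IsLocalizedModule.exists_of_eq (S := S) h5
  refine ⟨c * s, S.mul_mem c.2 s.2, ?_⟩
  rw [mul_smul]
  have hc' : (c : R) • w = (c : R) • (s : R) • m := hc
  rw [← hc']
  exact W.smul_mem _ hw

end MainPart

section FinalPart
variable {R} [IsNoetherianRing R]

lemma exists_x (a b : Ideal R) (hb : ¬ a ≤ b) (P : Finset (Ideal R))
    (hP : ∀ p ∈ P, p.IsPrime ∧ ¬ a ≤ p) : ∃ x ∈ a, x ∉ b ∧ ∀ p ∈ P, x ∉ p := by
  classical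
  by_contra! hcon
  have h1 : (a : Set R) ⊆ ⋃ i ∈ ((insert b P : Finset (Ideal R)) : Set (Ideal R)), (i : Set R) := by
    intro x hx
    by_cases hxb : x ∈ b
    · exact Set.mem_biUnion (x := b) (by simp) hxb
    · obtain ⟨p, hp, hxp⟩ := hcon x hx hxb
      exact Set.mem_biUnion (x := p) (by simp [hp]) hxp
  rw [Ideal.subset_union_prime (f := fun i : Ideal R => i) b b (by
    intro i hi hib _
    exact (hP i ((Finset.mem_insert.1 hi).resolve_left hib)).1)] at h1
  obtain ⟨i, hi, hai⟩ := h1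
  rcases Finset.mem_insert.1 hi with rfl | hi
  · exact hb hai
  · exact (hP i hi).2 hai

lemma ann_lt {M : Type u} [AddCommGroup M] [Module R M] (x : R)
    (hx : x ∉ Module.annihilator R M) :
    Module.annihilator R M < Module.annihilator R (LinearMap.ker (LinearMap.lsmul R M x)) := by
  refine lt_of_le_of_ne (LinearMap.annihilator_le_of_injective (Submodule.subtype _)
    (Submodule.subtype_injective _)) (fun h => hx ?_)
  rw [h, Module.mem_annihilator]
  exact fun m => Subtype.ext m.2

lemma ef_of_le_ann {a : Ideal R} {M : Type u} [AddCommGroup M] [Module R M]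
    (h : a ≤ Module.annihilator R M) (h0 : EF a 0 M) (i : ℕ) : EF a i M := by
  have htop : tors a M = ⊤ := by
    rw [eq_top_iff]
    intro m _ r hr
    exact Module.mem_annihilator.1 (h hr) m
  have hf := ef_zero_iff.1 h0
  rw [htop] at hf
  have : Module.Finite R M := Module.Finite.equiv Submodule.topEquiv
  exact ef_of_finite i

lemma cofinite_dim_zero (a : Ideal R) (b : Ideal R) : ∀ (M : Type u) [AddCommGroup M] [Module R M],
    Module.annihilator R M = b →
    Module.support R M ⊆ PrimeSpectrum.zeroLocus (a : Set R) →
    (∀ p ∈ Module.support R M, p.asIdeal.IsMaximal) → EF a 0 M → ∀ i, EF a i M := by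
  induction b using WellFoundedGT.induction with
  | ind b ih =>
  intro M _ _ hb hs hmax h0 i
  by_cases hab : a ≤ Module.annihilator R M
  · exact ef_of_le_ann hab h0 i
  have hfin := ef_zero_iff.1 h0
  have h1 : IsArtinian R (tors a M) := artinian_of_support hfin (fun p hp =>
    hmax p (Module.support_subset_of_injective (Submodule.subtype _)
      (Submodule.subtype_injective _) hp))
  have : IsArtinian R M := artinian_of_tors a M (tors_of_supp a M hs) h1
  obtain ⟨P, hP, hgen⟩ := exists_generic a M hfin
  obtain ⟨x, hxa, hxb, hxP⟩ := exists_x a _ hab P hP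
  obtain ⟨L, hL, htop⟩ := hgen x hxP
  have hN := Module.support_subset_of_injective
    (Submodule.subtype (LinearMap.ker (LinearMap.lsmul R M x))) (Submodule.subtype_injective _)
  refine ef_of_x hxa i (ih _ (hb ▸ ann_lt x hxb) _ rfl (hN.trans hs) (fun p hp => hmax p (hN hp))
    (ef_zero_of_injective _ (Submodule.subtype_injective _) h0) i) ?_
  have hLf : Module.Finite R L := Module.Finite.iff_fg.2 hL
  have : Module.Finite R (M ⧸ LinearMap.range (LinearMap.lsmul R M x)) := by
    refine Module.Finite.of_surjective ((Submodule.mkQ _).comp L.subtype) ?_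
    intro z
    obtain ⟨m, rfl⟩ := Submodule.mkQ_surjective _ z
    have hm : m ∈ LinearMap.range (LinearMap.lsmul R M x) ⊔ L := by rw [htop]; trivial
    obtain ⟨y, hy, l, hl, rfl⟩ := Submodule.mem_sup.1 hm
    refine ⟨⟨l, hl⟩, ?_⟩
    have : (LinearMap.range (LinearMap.lsmul R M x)).mkQ y = 0 := by simpa using hy
    rw [map_add, this, zero_add]; rfl
  exact fun j _ => ef_of_finite j

lemma cofinite_dim_one (a : Ideal R) (b : Ideal R) : ∀ (M : Type u) [AddCommGroup M] [Module R M],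
    Module.annihilator R M = b →
    Module.support R M ⊆ PrimeSpectrum.zeroLocus (a : Set R) →
    (∀ p ∈ Module.support R M, ∀ q ∈ Module.support R M, ∀ r ∈ Module.support R M,
      p < q → q < r → False) → EF a 0 M → EF a 1 M → ∀ i, EF a i M := by
  induction b using WellFoundedGT.induction with
  | ind b ih =>
  intro M _ _ hb hs hdim h0 h1 i
  by_cases hab : a ≤ Module.annihilator R M
  · exact ef_of_le_ann hab h0 i
  have hfin := ef_zero_iff.1 h0
  let T : Set (Ideal R) := {p | p ∈ (Module.annihilator R (tors a M)).minimalPrimes ∧ ¬ p.IsMaximal}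
  have hTfin : T.Finite :=
    (Ideal.finite_minimalPrimes_of_isNoetherianRing R _).subset fun p hp => hp.1
  let S : Submonoid R :=
    { carrier := {s | ∀ p ∈ T, s ∉ p}
      one_mem' := fun p hp h => hp.1.1.1.ne_top ((Ideal.eq_top_iff_one p).2 h)
      mul_mem' := fun {x y} hx hy p hp h => (hp.1.1.1.mem_or_mem h).elim (hx p hp) (hy p hp) }
  have hST : ∀ q : Ideal R, (∀ s ∈ S, s ∉ q) → ∃ p ∈ T, q ≤ p := by
    intro q hq
    have : (q : Set R) ⊆ ⋃ p ∈ T, (p : Set R) := by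
      intro x hx
      by_contra hcon
      refine hq x (fun p hp hxp => hcon (Set.mem_biUnion hp hxp)) hx
    exact (Ideal.subset_union_prime_finite hTfin ⊥ ⊥ (fun p hp _ _ => hp.1.1.1)).1 this
  have htors := tors_of_supp a M hs
  obtain ⟨P, hP, hgen⟩ := exists_generic_loc a M htors hfin S (by
    intro p q hp hq hann hqS hpq
    obtain ⟨p', hp', hqp'⟩ := hST q hqS
    have : p' ≤ p := hp'.1.2 ⟨hp, hann⟩ (hpq.trans hqp')
    exact le_antisymm hpq (hqp'.trans this))
  obtain ⟨x, hxa, hxb, hxP⟩ := exists_x a _ hab P hP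
  obtain ⟨L, hL, hLs⟩ := hgen x hxP
  let μ := LinearMap.lsmul R M x
  let N := LinearMap.ker μ
  let I := LinearMap.range μ
  have hex : Function.Exact N.subtype μ.rangeRestrict := by
    intro m
    rw [Submodule.coe_subtype, Subtype.range_coe]
    exact ⟨fun h => congrArg Subtype.val h, fun h => Subtype.ext h⟩
  have hinj := N.subtype_injective
  have hsur := μ.surjective_rangeRestrict
  have hN0 : EF a 0 N := ef_zero_of_injective _ hinj h0
  have hI0 : EF a 0 I := ef_zero_of_injective _ I.subtype_injective h0
  have hN1 : EF a 1 N := ef_left _ _ hinj hsur hex 0 hI0 h1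
  have hNs := Module.support_subset_of_injective N.subtype hinj
  have hNc : ∀ i, EF a i N := ih _ (hb ▸ ann_lt x hxb) N rfl (hNs.trans hs)
    (fun p hp q hq r hr => hdim p (hNs hp) q (hNs hq) r (hNs hr)) hN0 hN1
  have hI1 : EF a 1 I := ef_right _ _ hinj hsur hex 1 h1 (hNc 2)
  have hex2 : Function.Exact I.subtype I.mkQ := LinearMap.exact_subtype_mkQ I
  have hQ0 : EF a 0 (M ⧸ I) := ef_right _ _ I.subtype_injective I.mkQ_surjective hex2 0 h0 hI1
  let Lb : Submodule R (M ⧸ I) := L.map I.mkQ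
  have : Module.Finite R Lb := Module.Finite.iff_fg.2 (hL.map _)
  have hex3 : Function.Exact Lb.subtype Lb.mkQ := LinearMap.exact_subtype_mkQ Lb
  have hK0 : EF a 0 ((M ⧸ I) ⧸ Lb) :=
    ef_right _ _ Lb.subtype_injective Lb.mkQ_surjective hex3 0 hQ0 (ef_of_finite 1)
  have hKs : Module.support R ((M ⧸ I) ⧸ Lb) ⊆ Module.support R M :=
    Module.support_subset_of_surjective (Lb.mkQ.comp I.mkQ)
      (Lb.mkQ_surjective.comp I.mkQ_surjective)
  have hKmax : ∀ q ∈ Module.support R ((M ⧸ I) ⧸ Lb), q.asIdeal.IsMaximal := by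
    intro q hq
    have hqM := hKs hq
    have hqT : ∃ s ∈ S, s ∈ q.asIdeal := by
      obtain ⟨z, hz⟩ := Module.mem_support_iff_exists_annihilator.1 hq
      obtain ⟨z, rfl⟩ := Lb.mkQ_surjective z
      obtain ⟨m, rfl⟩ := I.mkQ_surjective z
      obtain ⟨s, hs, hsm⟩ := hLs m
      refine ⟨s, hs, hz ((Submodule.mem_annihilator_span_singleton _ _).2 ?_)⟩
      obtain ⟨y, hy, l, hl, hyl⟩ := Submodule.mem_sup.1 hsm
      rw [← map_smul, ← map_smul, ← hyl, map_add]
      have h1 : I.mkQ y = 0 := (Submodule.Quotient.mk_eq_zero I).2 hy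
      rw [h1, zero_add, Submodule.mkQ_apply, Submodule.Quotient.mk_eq_zero]
      exact Submodule.mem_map_of_mem hl
    obtain ⟨s, hsS, hsq⟩ := hqT
    obtain ⟨p, hp, hpq⟩ := Ideal.exists_minimalPrimes_le (ann_le_of_supp a M hs q hqM)
    have hpM : (⟨p, hp.1.1⟩ : PrimeSpectrum R) ∈ Module.support R M := by
      apply Module.support_subset_of_injective (tors a M).subtype (Submodule.subtype_injective _)
      rw [Module.mem_support_iff_of_finite]
      exact hp.1.2
    by_cases hpeq : p = q.asIdeal
    · by_contra hmax
      exact hsS p ⟨hp, hpeq ▸ hmax⟩ (hpeq ▸ hsq)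
    · obtain ⟨J, hJ, hqJ⟩ := Ideal.exists_le_maximal q.asIdeal q.2.ne_top
      by_cases hqeq : q.asIdeal = J
      · rw [hqeq]; exact hJ
      · exfalso
        have hqJ' : q ≤ (⟨J, hJ.isPrime⟩ : PrimeSpectrum R) := hqJ
        refine hdim _ hpM q hqM ⟨J, hJ.isPrime⟩ (Module.mem_support_mono hqJ' hqM) ?_ ?_
        · exact lt_of_le_of_ne hpq (fun h => hpeq (congrArg PrimeSpectrum.asIdeal h))
        · exact lt_of_le_of_ne hqJ' (fun h => hqeq (congrArg PrimeSpectrum.asIdeal h))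
  have hKc := cofinite_dim_zero a _ _ rfl (hKs.trans hs) hKmax hK0
  have hQc : ∀ j, EF a j (M ⧸ I) := fun j =>
    ef_mid _ _ Lb.subtype_injective Lb.mkQ_surjective hex3 j (ef_of_finite j) (hKc j)
  exact ef_of_x hxa i (hNc i) (fun j _ => hQc j)

end FinalPart

theorem stmt5 [IsNoetherianRing R] (𝔞 : Ideal R) (M : ModuleCat.{u} R) [Nontrivial M]
    (h1 : suppDim R M ≤ 1)
    (h2 : Module.support R M ⊆ PrimeSpectrum.zeroLocus (𝔞 : Set R)) :
    IsCofinite R 𝔞 M ↔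
      Module.Finite R ((R ⧸ 𝔞) →ₗ[R] M) ∧
        Module.Finite R (extModule R 1 (ModuleCat.of R (R ⧸ 𝔞)) M) := by
  constructor
  · intro h
    exact ⟨ef_zero_iff_hom.1 ((finite_extModule_iff R 0 _ M).1 (h.2 0)), h.2 1⟩
  · rintro ⟨h3, h4⟩
    refine ⟨h2, fun i => (finite_extModule_iff R i _ M).2 ?_⟩
    refine cofinite_dim_one 𝔞 _ M rfl h2 ?_ (ef_zero_iff_hom.2 h3)
      ((finite_extModule_iff R 1 _ M).1 h4) i
    intro p hp q hq r hr hpq hqr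
    rcases Order.krullDim_le_one_iff.1 h1 ⟨q, hq⟩ with h | h
    · exact absurd (h (b := ⟨p, hp⟩) hpq.le) hpq.not_ge
    · exact absurd (h (b := ⟨r, hr⟩) hqr.le) hqr.not_ge
end
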